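/- Let d ≥ 5 and n ≥ 4, and let D_0 be a clustering of an n-element configuration in Z^d in which every cluster has 2 or 3 elements, with distinct cluster labels i and j. There is a number c = c(d,n) > 0 such that for all t ∈ Z_{≥0}, Q_{D_0}(ξ_1^{i,j} > t) ≤ 2·e^{−ct}, where ξ_1^{i,j} is the first time t ≥ 1 at which the i-th and j-th clusters of the IHAT chain both belong to Ref. -/

import Mathlib

open MeasureTheory

namespace HATFormal

/-- Points of the lattice `ℤ^d`. -/
abbrev Pt (d : ℕ) := Fin d → ℤ

/-- The `2d` unit steps of the simple random walk on `ℤ^d`. -/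
def Dir (d : ℕ) : Set (Pt d) :=
  {s | ∃ i : Fin d, s = Pi.single i 1 ∨ s = Pi.single i (-1)}

/-- The position, after `t` steps, of the walk started at `x` with steps `s`. -/
def wpos (d : ℕ) (x : Pt d) {T : ℕ} (s : Fin T → Pt d) (t : ℕ) : Pt d :=
  x + ∑ i ∈ Finset.univ.filter (fun i : Fin T => (i : ℕ) < t), s i

/-- The probability of an event `P` of the first `T` steps of simple random walk on `ℤ^d`. -/
noncomputable def prob (d T : ℕ) (P : (Fin T → Pt d) → Prop) : ℝ :=
  (Nat.card {s : Fin T → Pt d // (∀ i, s i ∈ Dir d) ∧ P s} : ℝ) / ((2 * d : ℕ) : ℝ) ^ T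

open Classical in
/-- `esc d A x = P_x(τ_A = ∞)` if `x ∈ A`, and `0` otherwise. -/
noncomputable def esc (d : ℕ) (A : Set (Pt d)) (x : Pt d) : ℝ :=
  if x ∈ A then ⨅ T : ℕ, prob d T (fun s => ∀ t, 1 ≤ t → t ≤ T → wpos d x s t ∉ A) else 0

/-- The capacity of `A`. -/
noncomputable def capa (d : ℕ) (A : Set (Pt d)) : ℝ := ∑' x : A, esc d A (x : Pt d)

/-- The harmonic measure `H_A(x) = esc_A(x) / cap_A`. -/
noncomputable def harm (d : ℕ) (A : Set (Pt d)) (x : Pt d) : ℝ := esc d A x / capa d A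

/-- `P_x(τ_W < ∞)`. -/
noncomputable def retProb (d : ℕ) (W : Set (Pt d)) (x : Pt d) : ℝ :=
  ∑' t : ℕ, prob d t (fun s => 1 ≤ t ∧ wpos d x s t ∈ W ∧
    ∀ u, 1 ≤ u → u < t → wpos d x s u ∉ W)

/-- `P_x(τ_W < ∞ and S_{τ_W − 1} = y)`. -/
noncomputable def hitFrom (d : ℕ) (W : Set (Pt d)) (x y : Pt d) : ℝ :=
  ∑' t : ℕ, prob d t (fun s => 1 ≤ t ∧ wpos d x s t ∈ W ∧ wpos d x s (t - 1) = y ∧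
    ∀ u, 1 ≤ u → u < t → wpos d x s u ∉ W)

/-- `P_x(τ_W < ∞ and S_{τ_W} ∈ T)`. -/
noncomputable def firstHitIn (d : ℕ) (W T : Set (Pt d)) (x : Pt d) : ℝ :=
  ∑' t : ℕ, prob d t (fun s => 1 ≤ t ∧ wpos d x s t ∈ W ∧ wpos d x s t ∈ T ∧
    ∀ u, 1 ≤ u → u < t → wpos d x s u ∉ W)

/-- `P_x(S_{τ_W − 1} = y ∣ τ_W < ∞)`. -/
noncomputable def transP (d : ℕ) (W : Set (Pt d)) (x y : Pt d) : ℝ :=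
  hitFrom d W x y / retProb d W x

/-- The Green's function of simple random walk on `ℤ^d`. -/
noncomputable def green (d : ℕ) (x : Pt d) : ℝ :=
  ∑' t : ℕ, prob d t (fun s => wpos d x s t = 0)

/-- Configurations: finite subsets of `ℤ^d`. -/
abbrev Conf (d : ℕ) := Finset (Pt d)

/-- `p_U(x, y)`, the probability that HAT activates at `x` and transports to `y`. -/
noncomputable def pHAT (d : ℕ) (U : Conf d) (x y : Pt d) : ℝ :=
  harm d (↑U) x * transP d ((↑U : Set (Pt d)) \ {x}) x y

open Classical in
/-- The transition probabilities of HAT. -/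
noncomputable def hatProb (d : ℕ) (U V : Conf d) : ℝ :=
  if V = U then ∑' z : Pt d, pHAT d U z z
  else ∑' x : Pt d, ∑' y : Pt d,
    if x ∈ U ∧ x ≠ y ∧ V = insert y (U.erase x) then pHAT d U x y else 0

instance (d : ℕ) : MeasurableSpace (Conf d) := ⊤

/-- `μ` is the law of HAT started from `U`. -/
def IsHATLaw (d : ℕ) (U : Conf d) (μ : Measure (ℕ → Conf d)) : Prop :=
  IsProbabilityMeasure μ ∧
  ∀ (t : ℕ) (u : ℕ → Conf d),
    μ {ω | ∀ s ≤ t, ω s = u s} =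
      (if u 0 = U then 1 else 0) *
        ∏ s ∈ Finset.range t, ENNReal.ofReal (hatProb d (u s) (u (s + 1)))

/-- A signed permutation plus translation of `ℤ^d`. -/
def SymImage (d : ℕ) (σ : Equiv.Perm (Fin d)) (ε : Fin d → ℤ) (v : Pt d) (x : Pt d) : Pt d :=
  fun i => v i + ε i * x (σ i)

/-- `SymEq d U V` holds when `V = gU` for a symmetry `g` of `ℤ^d`. -/
def SymEq (d : ℕ) (U V : Conf d) : Prop :=
  ∃ (σ : Equiv.Perm (Fin d)) (ε : Fin d → ℤ) (v : Pt d),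
    (∀ i, ε i = 1 ∨ ε i = -1) ∧ V = U.image (SymImage d σ ε v)

/-- Euclidean distance on `ℤ^d`. -/
noncomputable def dist0 (d : ℕ) (x y : Pt d) : ℝ :=
  Real.sqrt (∑ i, ((x i : ℝ) - (y i : ℝ)) ^ 2)

/-- Euclidean distance between finite subsets of `ℤ^d`. -/
noncomputable def setDist (d : ℕ) (A B : Finset (Pt d)) : ℝ :=
  sInf {r : ℝ | ∃ x ∈ A, ∃ y ∈ B, r = dist0 d x y}

/-- Euclidean diameter of a finite subset of `ℤ^d`. -/
noncomputable def diam0 (d : ℕ) (A : Finset (Pt d)) : ℝ :=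
  sSup {r : ℝ | ∃ x ∈ A, ∃ y ∈ A, r = dist0 d x y}

/-- Lattice (nearest-neighbor) adjacency in `ℤ^d`. -/
def latAdj (d : ℕ) (x y : Pt d) : Prop := (∑ i, (x i - y i).natAbs) = 1

/-- Exterior lattice boundary of a set. -/
def bdry (d : ℕ) (A : Set (Pt d)) : Set (Pt d) := {z | z ∉ A ∧ ∃ w ∈ A, latAdj d z w}

/-- Non-isolated configurations: some exposed element has a lattice neighbor in the set. -/
def NonIso (d : ℕ) (U : Conf d) : Prop :=
  ∃ x ∈ U, 0 < esc d (↑U) x ∧ ∃ y ∈ U, latAdj d x y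

/-- `C` is a clustering (ordered partition into nonempty clusters) of `U`. -/
def IsClusteringOf (d : ℕ) {k : ℕ} (C : Fin k → Finset (Pt d)) (U : Finset (Pt d)) : Prop :=
  (∀ i, (C i).Nonempty) ∧ (∀ i j, i ≠ j → Disjoint (C i) (C j)) ∧
    Finset.univ.biUnion C = U

/-- `C^{≠ i}`, the union of the clusters other than `i`. -/
def others (d : ℕ) {k : ℕ} (C : Fin k → Finset (Pt d)) (i : Fin k) : Finset (Pt d) :=
  Finset.univ.biUnion fun j => if j = i then ∅ else C j

/-- The separation of a clustering. -/
noncomputable def sep (d : ℕ) {k : ℕ} (C : Fin k → Finset (Pt d)) : ℝ :=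
  ⨅ i, setDist d (C i) (others d C i)

/-- `(a, b)` separated dimer-or-trimer (DOT) clusterings. -/
def IsDOT (d : ℕ) {k : ℕ} (C : Fin k → Finset (Pt d)) (a b : ℝ) : Prop :=
  (∀ i, (C i).card = 2 ∨ (C i).card = 3) ∧ a ≤ sep d C ∧
    ∀ i, diam0 d (C i) ≤ b * Real.log (setDist d (C i) (others d C i))

/-- Clusterings with an unspecified number of clusters. -/
abbrev ClusteringS (d : ℕ) := Σ k : ℕ, Fin k → Finset (Pt d)

/-- `π(C)`, the union of the clusters of `C`. -/
def confOf (d : ℕ) (C : ClusteringS d) : Conf d := Finset.univ.biUnion C.2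

/-- `C ∈ 𝒞(U, a, b)`. -/
def InC (d : ℕ) (U : Conf d) (a b : ℝ) (C : ClusteringS d) : Prop :=
  IsClusteringOf d C.2 U ∧ IsDOT d C.2 a b

/-- `U ∈ 𝒰_{d,n}(a, b)`. -/
def InU (d n : ℕ) (a b : ℝ) (U : Conf d) : Prop :=
  U.card = n ∧ ∃ C : ClusteringS d, InC d U a b C

/-- `C` is a clustering of an `n`-element configuration. -/
def IsClusteringConf (d n : ℕ) (C : ClusteringS d) : Prop :=
  (∀ i, (C.2 i).Nonempty) ∧ (∀ i j, i ≠ j → Disjoint (C.2 i) (C.2 j)) ∧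
    (confOf d C).card = n

open Classical in
/-- One step of the natural clustering. -/
noncomputable def clustStep (d : ℕ) (Ut Ut1 : Conf d) (C : ClusteringS d) : ClusteringS d :=
  if Ut1 = Ut then C
  else if h : ∃ p : Pt d × Pt d × Fin C.1,
      Ut \ Ut1 = {p.1} ∧ Ut1 \ Ut = {p.2.1} ∧ p.1 ∈ C.2 p.2.2 then
    ⟨C.1, Function.update C.2 h.choose.2.2
      (insert h.choose.2.1 ((C.2 h.choose.2.2).erase h.choose.1))⟩
  else ⟨1, fun _ => Ut1⟩

/-- The natural clustering of the trajectory `ω` with initial clustering `C0`. -/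
noncomputable def natClust (d : ℕ) (ω : ℕ → Conf d) (C0 : ClusteringS d) : ℕ → ClusteringS d
  | 0 => C0
  | t + 1 => clustStep d (ω t) (ω (t + 1)) (natClust d ω C0 t)

/-- `a_s = s^{1/2 − n^{−100}} + 100 n`. -/
noncomputable def aSep (n s : ℕ) : ℝ :=
  (s : ℝ) ^ ((1 : ℝ) / 2 - (n : ℝ) ^ (-(100 : ℝ))) + 100 * n

/-- `C^{i, x, y}`: remove `x` from cluster `i` of `C` and add `y` to that cluster. -/
def updC (d : ℕ) (C : ClusteringS d) (i : Fin C.1) (x y : Pt d) : ClusteringS d :=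
  ⟨C.1, Function.update C.2 i (insert y ((C.2 i).erase x))⟩

open Classical in
/-- The transition probabilities of the lifting of HAT to clusterings. -/
noncomputable def liftProb (d : ℕ) (E0 E1 : ClusteringS d) : ℝ :=
  ∑' x : Pt d, ∑' y : Pt d,
    if ∃ i : Fin E0.1, x ∈ E0.2 i ∧ E1 = updC d E0 i x y
    then pHAT d (confOf d E0) x y else 0

/-- The capacity of a clustering: the sum of the capacities of its clusters. -/
noncomputable def capS (d : ℕ) (C : ClusteringS d) : ℝ := ∑ i, capa d (↑(C.2 i))

/-- `H_C(i, x) = esc_{C^i}(x) / cap_C`. -/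
noncomputable def harmS (d : ℕ) (C : ClusteringS d) (i : Fin C.1) (x : Pt d) : ℝ :=
  esc d (↑(C.2 i)) x / capS d C

/-- `q_C(i, x, y)`. -/
noncomputable def qIHAT (d : ℕ) (C : ClusteringS d) (i : Fin C.1) (x y : Pt d) : ℝ :=
  harmS d C i x * transP d ((↑(C.2 i) : Set (Pt d)) \ {x}) x y

open Classical in
/-- The transition probabilities of intracluster HAT (IHAT). -/
noncomputable def ihatProb (d : ℕ) (D E : ClusteringS d) : ℝ :=
  ∑' x : Pt d, ∑' y : Pt d, ∑ i : Fin D.1,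
    if x ∈ D.2 i ∧ E = updC d D i x y then qIHAT d D i x y else 0

instance (d : ℕ) : MeasurableSpace (ClusteringS d) := ⊤

open Classical in
/-- `μ` is the law of the lifted HAT chain started from `E0`. -/
def IsLiftLaw (d : ℕ) (E0 : ClusteringS d) (μ : Measure (ℕ → ClusteringS d)) : Prop :=
  IsProbabilityMeasure μ ∧
  ∀ (t : ℕ) (u : ℕ → ClusteringS d),
    μ {ω | ∀ s ≤ t, ω s = u s} =
      (if u 0 = E0 then 1 else 0) *
        ∏ s ∈ Finset.range t, ENNReal.ofReal (liftProb d (u s) (u (s + 1)))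

open Classical in
/-- `μ` is the law of intracluster HAT started from `D0`. -/
def IsIHATLaw (d : ℕ) (D0 : ClusteringS d) (μ : Measure (ℕ → ClusteringS d)) : Prop :=
  IsProbabilityMeasure μ ∧
  ∀ (t : ℕ) (u : ℕ → ClusteringS d),
    μ {ω | ∀ s ≤ t, ω s = u s} =
      (if u 0 = D0 then 1 else 0) *
        ∏ s ∈ Finset.range t, ENNReal.ofReal (ihatProb d (u s) (u (s + 1)))

/-- `Pairs(E0, E1)`. -/
def Pairs (d : ℕ) (E0 E1 : ClusteringS d) : Set (Pt d × Pt d) :=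
  {p | 0 < pHAT d (confOf d E0) p.1 p.2 ∧
    ∃ i : Fin E0.1, p.1 ∈ E0.2 i ∧ E1 = updC d E0 i p.1 p.2}

/-- `Triples(E0, E1)`. -/
def Triples (d : ℕ) (E0 E1 : ClusteringS d) : Set (Fin E0.1 × Pt d × Pt d) :=
  {q | 0 < qIHAT d E0 q.1 q.2.1 q.2.2 ∧ E1 = updC d E0 q.1 q.2.1 q.2.2}

/-- The first standard basis vector of `ℤ^d`. -/
def e1v (d : ℕ) : Pt d := fun i => if (i : ℕ) = 0 then 1 else 0

/-- Reference dimers and trimers. -/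
def Ref (d : ℕ) : Set (Finset (Pt d)) :=
  {A | ∃ x : Pt d, A = {x, x + e1v d} ∨ A = {x, x + e1v d, x + e1v d + e1v d}}

/-- *-adjacency in `ℤ^d`: distinct points differing by at most one in each coordinate. -/
def starAdj (d : ℕ) (x y : Pt d) : Prop := x ≠ y ∧ ∀ i, (x i - y i).natAbs ≤ 1

/-- The *-visible boundary of `A`. -/
def visBdry (d : ℕ) (A : Finset (Pt d)) : Set (Pt d) :=
  {x | (∃ y ∈ A, starAdj d x y) ∧
    ∃ γ : ℕ → Pt d, γ 0 = x ∧ (∀ t, latAdj d (γ t) (γ (t + 1))) ∧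
      (∀ t, γ t ∉ A) ∧ ∀ r : ℝ, ∃ t, r < dist0 d (γ t) 0}

/-- `A` is connected in the nearest-neighbor graph of `ℤ^d`. -/
def LatConnected (d : ℕ) (A : Finset (Pt d)) : Prop :=
  ∀ x ∈ A, ∀ y ∈ A, ∃ (L : ℕ) (γ : ℕ → Pt d), γ 0 = x ∧ γ L = y ∧
    (∀ t < L, latAdj d (γ t) (γ (t + 1))) ∧ ∀ t ≤ L, γ t ∈ A

/-- Strict lexicographic order on `ℤ^d`. -/
def lexLt (d : ℕ) (x y : Pt d) : Prop :=
  ∃ i : Fin d, (∀ j, j < i → x j = y j) ∧ x i < y i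

/-- `x` is the lex (least) element of `A`. -/
def IsLex (d : ℕ) (A : Finset (Pt d)) (x : Pt d) : Prop :=
  x ∈ A ∧ ∀ y ∈ A, y ≠ x → lexLt d x y

section Walk

open Classical in
/-- The steps as a finset. -/
noncomputable def dirF (d : ℕ) : Finset (Pt d) :=
  Finset.univ.image (fun i : Fin d => (Pi.single i 1 : Pt d)) ∪
    Finset.univ.image (fun i : Fin d => (Pi.single i (-1) : Pt d))

lemma mem_dirF {d : ℕ} {s : Pt d} : s ∈ dirF d ↔ s ∈ Dir d := by
  unfold dirF Dir
  simp only [Finset.mem_union, Finset.mem_image, Finset.mem_univ, true_and, Set.mem_ofPred_eq]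
  constructor
  · rintro (⟨i, rfl⟩ | ⟨i, rfl⟩)
    · exact ⟨i, Or.inl rfl⟩
    · exact ⟨i, Or.inr rfl⟩
  · rintro ⟨i, h | h⟩
    · exact Or.inl ⟨i, h.symm⟩
    · exact Or.inr ⟨i, h.symm⟩

lemma single_inj' {d : ℕ} (c : ℤ) (hc : c ≠ 0) :
    Function.Injective (fun i : Fin d => (Pi.single i c : Pt d)) := by
  intro i j h
  by_contra hij
  have := congrFun h i
  simp [hij] at this
  exact hc this

lemma sum_dirF {d : ℕ} (g : Pt d → ℝ) :
    ∑ e ∈ dirF d, g e = ∑ i : Fin d, (g (Pi.single i 1) + g (Pi.single i (-1))) := by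
  classical
  unfold dirF
  rw [Finset.sum_union, Finset.sum_image, Finset.sum_image, Finset.sum_add_distrib]
  · exact fun i _ j _ h => single_inj' (-1) (by norm_num) h
  · exact fun i _ j _ h => single_inj' 1 (by norm_num) h
  · rw [Finset.disjoint_left]
    intro a ha hb
    simp only [Finset.mem_image, Finset.mem_univ, true_and] at ha hb
    obtain ⟨i, rfl⟩ := ha
    obtain ⟨j, hj⟩ := hb
    have := congrFun hj i
    by_cases hij : i = j
    · subst hij; simp at this
    · simp [hij] at this

lemma card_dirF (d : ℕ) : ((dirF d).card : ℝ) = ((2 * d : ℕ) : ℝ) := by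
  have := sum_dirF (d := d) (fun _ => 1)
  simp at this
  rw [this]; push_cast; ring

open Classical in
lemma prob_eq (d T : ℕ) (P : (Fin T → Pt d) → Prop) :
    prob d T P = (((Fintype.piFinset (fun _ : Fin T => dirF d)).filter P).card : ℝ) /
      ((2 * d : ℕ) : ℝ) ^ T := by
  unfold prob
  congr 2
  rw [← Nat.card_eq_finsetCard]
  apply Nat.card_congr
  apply Equiv.subtypeEquivRight
  intro s
  simp [Fintype.mem_piFinset, mem_dirF]

lemma prob_nonneg (d T : ℕ) (P : (Fin T → Pt d) → Prop) : 0 ≤ prob d T P := by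
  unfold prob; positivity

lemma prob_mono {d T : ℕ} {P Q : (Fin T → Pt d) → Prop}
    (h : ∀ s, (∀ i, s i ∈ Dir d) → P s → Q s) : prob d T P ≤ prob d T Q := by
  classical
  rw [prob_eq, prob_eq]
  refine div_le_div_of_nonneg_right (Nat.cast_le.mpr (Finset.card_le_card ?_)) (by positivity)
  intro s hs
  simp only [Finset.mem_filter, Fintype.mem_piFinset, mem_dirF] at hs ⊢
  exact ⟨hs.1, h s hs.1 hs.2⟩

lemma prob_congr {d T : ℕ} {P Q : (Fin T → Pt d) → Prop}
    (h : ∀ s, P s ↔ Q s) : prob d T P = prob d T Q := by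
  have : P = Q := by ext s; exact h s
  rw [this]

lemma prob_le_sum {d T : ℕ} {ι : Type*} (F : Finset ι) {P : (Fin T → Pt d) → Prop}
    {Q : ι → (Fin T → Pt d) → Prop}
    (h : ∀ s, (∀ i, s i ∈ Dir d) → P s → ∃ y ∈ F, Q y s) :
    prob d T P ≤ ∑ y ∈ F, prob d T (Q y) := by
  classical
  simp only [prob_eq]
  rw [← Finset.sum_div]
  gcongr
  rw [← Nat.cast_sum]
  norm_cast
  refine le_trans (Finset.card_le_card ?_) (Finset.card_biUnion_le (s := F))
  intro s hs
  simp only [Finset.mem_filter, Fintype.mem_piFinset, mem_dirF, Finset.mem_biUnion] at hs ⊢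
  obtain ⟨y, hy, hq⟩ := h s hs.1 hs.2
  exact ⟨y, hy, hs.1, hq⟩

lemma prob_add_le {d T : ℕ} {P Q R : (Fin T → Pt d) → Prop}
    (hP : ∀ s, P s → R s) (hQ : ∀ s, Q s → R s) (hPQ : ∀ s, P s → ¬ Q s) :
    prob d T P + prob d T Q ≤ prob d T R := by
  classical
  simp only [prob_eq]
  rw [← add_div]
  gcongr
  norm_cast
  rw [← Finset.card_union_of_disjoint]
  · apply Finset.card_le_card
    intro s hs
    simp only [Finset.mem_filter, Finset.mem_union] at hs ⊢
    rcases hs with hs | hs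
    · exact ⟨hs.1, hP s hs.2⟩
    · exact ⟨hs.1, hQ s hs.2⟩
  · rw [Finset.disjoint_left]
    intro s hs hs'
    simp only [Finset.mem_filter] at hs hs'
    exact hPQ s hs.2 hs'.2

/-- First-step decomposition. -/
lemma prob_cons (d T : ℕ) (P : (Fin (T + 1) → Pt d) → Prop) :
    prob d (T + 1) P =
      (∑ e ∈ dirF d, prob d T (fun s => P (Fin.cons e s))) / ((2 * d : ℕ) : ℝ) := by
  classical
  simp only [prob_eq]
  rw [← Finset.sum_div, div_div, pow_succ]
  congr 1
  rw [← Nat.cast_sum, ← Finset.card_sigma]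
  norm_cast
  symm
  refine Finset.card_bij (fun p _ => (Fin.cons p.1 p.2 : Fin (T + 1) → Pt d)) ?_ ?_ ?_
  · rintro ⟨e, s⟩ h
    simp only [Finset.mem_sigma, Finset.mem_filter, Fintype.mem_piFinset] at h ⊢
    refine ⟨fun i => ?_, h.2.2⟩
    refine Fin.cases ?_ (fun i => ?_) i
    · simpa using h.1
    · simpa using h.2.1 i
  · rintro ⟨e, s⟩ _ ⟨e', s'⟩ _ h
    obtain ⟨h1, h2⟩ := Fin.cons_injective2 h
    simp only at h1 h2
    rw [h1, h2]
  · intro s hs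
    simp only [Finset.mem_filter, Fintype.mem_piFinset] at hs
    refine ⟨⟨s 0, Fin.tail s⟩, ?_, ?_⟩
    · simp only [Finset.mem_sigma, Finset.mem_filter, Fintype.mem_piFinset]
      refine ⟨hs.1 0, fun i => hs.1 i.succ, ?_⟩
      rw [Fin.cons_self_tail]; exact hs.2
    · simp

/-- Last-step decomposition. -/
lemma prob_snoc (d T : ℕ) (P : (Fin (T + 1) → Pt d) → Prop) :
    prob d (T + 1) P =
      (∑ e ∈ dirF d, prob d T (fun s => P (Fin.snoc s e))) / ((2 * d : ℕ) : ℝ) := by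
  classical
  simp only [prob_eq]
  rw [← Finset.sum_div, div_div, pow_succ]
  congr 1
  rw [← Nat.cast_sum, ← Finset.card_sigma]
  norm_cast
  symm
  refine Finset.card_bij (fun p _ => (Fin.snoc p.2 p.1 : Fin (T + 1) → Pt d)) ?_ ?_ ?_
  · rintro ⟨e, s⟩ h
    simp only [Finset.mem_sigma, Finset.mem_filter, Fintype.mem_piFinset] at h ⊢
    refine ⟨fun i => ?_, h.2.2⟩
    refine Fin.lastCases ?_ (fun i => ?_) i
    · simpa using h.1
    · simpa using h.2.1 i
  · rintro ⟨e, s⟩ _ ⟨e', s'⟩ _ h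
    obtain ⟨h1, h2⟩ := Fin.snoc_injective2 h
    simp only at h1 h2
    rw [h1, h2]
  · intro s hs
    simp only [Finset.mem_filter, Fintype.mem_piFinset] at hs
    refine ⟨⟨s (Fin.last T), Fin.init s⟩, ?_, ?_⟩
    · simp only [Finset.mem_sigma, Finset.mem_filter, Fintype.mem_piFinset]
      refine ⟨hs.1 _, fun i => hs.1 i.castSucc, ?_⟩
      rw [Fin.snoc_init_self]; exact hs.2
    · simp

lemma prob_zero (d : ℕ) (P : (Fin 0 → Pt d) → Prop) (h : P Fin.elim0) : prob d 0 P = 1 := by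
  classical
  rw [prob_eq]
  have : Finset.filter P (Fintype.piFinset (fun _ : Fin 0 => dirF d)) = {Fin.elim0} := by
    ext s
    have : s = Fin.elim0 := Subsingleton.elim _ _
    subst this
    simp only [Finset.mem_filter, Fintype.mem_piFinset, Finset.mem_singleton, h, and_true, iff_true]
    exact fun i => i.elim0
  rw [this]; simp

lemma wpos_zero {d : ℕ} (x : Pt d) {T : ℕ} (s : Fin T → Pt d) : wpos d x s 0 = x := by
  simp [wpos]

lemma wpos_cons {d : ℕ} (x e : Pt d) {T : ℕ} (s : Fin T → Pt d) (t : ℕ) :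
    wpos d x (Fin.cons e s : Fin (T + 1) → Pt d) (t + 1) = wpos d (x + e) s t := by
  unfold wpos
  rw [Finset.sum_filter, Finset.sum_filter, Fin.sum_univ_succ]
  simp [add_assoc]

lemma wpos_snoc {d : ℕ} (x e : Pt d) {T : ℕ} (s : Fin T → Pt d) (t : ℕ) (ht : t ≤ T) :
    wpos d x (Fin.snoc s e : Fin (T + 1) → Pt d) t = wpos d x s t := by
  unfold wpos
  rw [Finset.sum_filter, Finset.sum_filter, Fin.sum_univ_castSucc]
  simp [Nat.not_lt.mpr ht]

lemma wpos_snoc_last {d : ℕ} (x e : Pt d) {T : ℕ} (s : Fin T → Pt d) :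
    wpos d x (Fin.snoc s e : Fin (T + 1) → Pt d) (T + 1) = wpos d x s T + e := by
  unfold wpos
  rw [Finset.sum_filter, Finset.sum_filter, Fin.sum_univ_castSucc]
  simp only [Fin.snoc_castSucc, Fin.snoc_last, Fin.val_castSucc, Fin.val_last]
  rw [if_pos (Nat.lt_succ_self T), ← add_assoc]
  congr 2
  apply Finset.sum_congr rfl
  intro i _
  rw [if_pos i.2, if_pos (by omega)]

lemma avg_ge {d : ℕ} (hd : 0 < d) (g : Pt d → ℝ) (hg : ∀ e, 0 ≤ g e) (e : Pt d)
    (he : e ∈ Dir d) : g e / ((2 * d : ℕ) : ℝ) ≤ (∑ e ∈ dirF d, g e) / ((2 * d : ℕ) : ℝ) := by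
  gcongr
  exact Finset.single_le_sum (fun i _ => hg i) (mem_dirF.mpr he)

lemma avg_le {d : ℕ} (hd : 0 < d) (g : Pt d → ℝ) (b : ℝ) (hg : ∀ e, g e ≤ b) :
    (∑ e ∈ dirF d, g e) / ((2 * d : ℕ) : ℝ) ≤ b := by
  have h0 : (0 : ℝ) < ((2 * d : ℕ) : ℝ) := by positivity
  rw [div_le_iff₀ h0]
  calc ∑ e ∈ dirF d, g e ≤ ∑ e ∈ dirF d, b := Finset.sum_le_sum (fun i _ => hg i)
    _ = b * ((2 * d : ℕ) : ℝ) := by rw [Finset.sum_const, nsmul_eq_mul, card_dirF, mul_comm]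

lemma prob_le_one {d : ℕ} (hd : 0 < d) (T : ℕ) (P : (Fin T → Pt d) → Prop) :
    prob d T P ≤ 1 := by
  induction T with
  | zero =>
    exact (prob_mono (Q := fun _ => True) (fun _ _ _ => trivial)).trans_eq (prob_zero d _ trivial)
  | succ T ih =>
    rw [prob_cons]
    exact avg_le hd _ _ (fun e => ih _)

lemma prob_ext_snoc {d : ℕ} (hd : 0 < d) (T : ℕ) (P : (Fin (T + 1) → Pt d) → Prop)
    (Q : (Fin T → Pt d) → Prop) (h : ∀ s e, P (Fin.snoc s e) ↔ Q s) :
    prob d (T + 1) P = prob d T Q := by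
  rw [prob_snoc]
  simp only [h]
  rw [Finset.sum_const, nsmul_eq_mul, card_dirF]
  field_simp

end Walk
section Escape

/-- Superharmonic function used to bound hitting probabilities. -/
noncomputable def shf (d : ℕ) (x : Pt d) : ℝ := 1 / (∑ i, (x i : ℝ) ^ 2 + d)

lemma shf_single {d : ℕ} (x : Pt d) (i : Fin d) (c : ℤ) :
    ∑ j, (((x + Pi.single i c : Pt d) j : ℤ) : ℝ) ^ 2 =
      ∑ j, (x j : ℝ) ^ 2 + 2 * c * x i + c ^ 2 := by
  classical
  have h : ∀ j, (((x + Pi.single i c : Pt d) j : ℤ) : ℝ) ^ 2 =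
      (x j : ℝ) ^ 2 + if j = i then 2 * (c : ℝ) * x i + c ^ 2 else 0 := by
    intro j
    by_cases hj : j = i
    · subst hj; simp; ring
    · simp [hj]
  simp only [h, Finset.sum_add_distrib]
  simp; ring

lemma pair_bound (y u N x : ℝ) (hy : 0 < y) (hu : u = 4 * x ^ 2) (huN : u ≤ 4 * N)
    (hN : 0 < y ^ 2 - 4 * N) :
    1 / (y + 2 * x) + 1 / (y - 2 * x) ≤ 2 / y + 2 * u / (y * (y ^ 2 - 4 * N)) := by
  have hxy : (2 * x) ^ 2 < y ^ 2 := by nlinarith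
  have habs := abs_lt_of_sq_lt_sq hxy hy.le
  rw [abs_lt] at habs
  have h1 : 0 < y + 2 * x := by linarith
  have h2 : 0 < y - 2 * x := by linarith
  have h3 : 0 < y ^ 2 - u := by linarith
  have e1 : 1 / (y + 2 * x) + 1 / (y - 2 * x) = 2 / y + 2 * u / (y * (y ^ 2 - u)) := by
    have : y ^ 2 - u = (y + 2 * x) * (y - 2 * x) := by rw [hu]; ring
    rw [this, hu]
    field_simp
    ring
  rw [e1]
  have : 0 ≤ u := by rw [hu]; positivity
  gcongr

lemma shf_super {d : ℕ} (hd : 5 ≤ d) (x : Pt d) :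
    (∑ e ∈ dirF d, shf d (x + e)) / ((2 * d : ℕ) : ℝ) ≤ shf d x := by
  have hd' : (5 : ℝ) ≤ d := by exact_mod_cast hd
  rw [sum_dirF]
  unfold shf
  simp only [shf_single]
  set N : ℝ := ∑ j, (x j : ℝ) ^ 2 with hN
  have hN0 : 0 ≤ N := Finset.sum_nonneg (fun i _ => sq_nonneg _)
  set y : ℝ := N + d + 1 with hy
  have hy0 : 0 < y := by positivity
  have hk : 0 < y ^ 2 - 4 * N := by nlinarith
  have hterm : ∀ i : Fin d, (1 / (N + 2 * ((1 : ℤ) : ℝ) * x i + ((1 : ℤ) : ℝ) ^ 2 + d) +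
      1 / (N + 2 * ((-1 : ℤ) : ℝ) * x i + ((-1 : ℤ) : ℝ) ^ 2 + d)) ≤
        2 / y + 2 * (4 * (x i : ℝ) ^ 2) / (y * (y ^ 2 - 4 * N)) := by
    intro i
    have := pair_bound y (4 * (x i : ℝ) ^ 2) N (x i) hy0 rfl (by
      have : (x i : ℝ) ^ 2 ≤ N :=
        Finset.single_le_sum (f := fun j => (x j : ℝ) ^ 2) (fun j _ => sq_nonneg _)
          (Finset.mem_univ i)
      linarith) hk
    convert this using 3 <;> (push_cast; rw [hy]; ring)
  have hsum := Finset.sum_le_sum (fun i (_ : i ∈ Finset.univ) => hterm i)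
  have hd0 : (0 : ℝ) < ((2 * d : ℕ) : ℝ) := by push_cast; positivity
  rw [div_le_iff₀ hd0]
  refine hsum.trans ?_
  have hs2 : ∑ i, 2 * (4 * (x i : ℝ) ^ 2) / (y * (y ^ 2 - 4 * N)) =
      2 * (4 * N) / (y * (y ^ 2 - 4 * N)) := by
    rw [← Finset.sum_div, ← Finset.mul_sum, ← Finset.mul_sum]
  rw [Finset.sum_add_distrib, hs2]
  simp only [Finset.sum_const, Finset.card_univ, Fintype.card_fin, nsmul_eq_mul]
  push_cast
  have hM : 0 < N + d := by positivity
  have key : 4 * N / (y ^ 2 - 4 * N) ≤ d / (N + d) := by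
    rw [div_le_div_iff₀ hk hM]
    rw [hy]; nlinarith [mul_nonneg hN0 hN0, mul_nonneg hN0 (by linarith : (0 : ℝ) ≤ d - 5),
      mul_nonneg (mul_nonneg hN0 hN0) (by linarith : (0 : ℝ) ≤ d - 5),
      mul_nonneg (mul_nonneg hN0 (by linarith : (0 : ℝ) ≤ d)) (by linarith : (0 : ℝ) ≤ d - 5)]
  have e : 2 * (4 * N) / (y * (y ^ 2 - 4 * N)) = 2 / y * (4 * N / (y ^ 2 - 4 * N)) := by
    field_simp
  rw [e]
  have h2 : 2 / y * (4 * N / (y ^ 2 - 4 * N)) ≤ 2 / y * (d / (N + d)) := by gcongr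
  have h3 : (d : ℝ) * (2 / y) + 2 / y * (d / (N + d)) = 1 / (N + d) * (2 * d) := by
    rw [hy]; field_simp
  linarith

lemma shf_nonneg {d : ℕ} (x : Pt d) : 0 ≤ shf d x := by
  unfold shf
  have : 0 ≤ ∑ j, (x j : ℝ) ^ 2 := Finset.sum_nonneg (fun i _ => sq_nonneg _)
  positivity

lemma avoid_ge {d : ℕ} (hd : 5 ≤ d) (A : Finset (Pt d)) (T : ℕ) (x : Pt d) :
    1 - d * ∑ a ∈ A, shf d (x - a) ≤
      prob d T (fun s => ∀ t, t ≤ T → wpos d x s t ∉ (A : Set (Pt d))) := by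
  have hd0 : (0 : ℝ) < d := by have : 0 < d := by omega
                               exact_mod_cast this
  induction T generalizing x with
  | zero =>
    by_cases hx : x ∈ A
    · refine le_trans ?_ (prob_nonneg _ _ _)
      have : shf d (x - x) ≤ ∑ a ∈ A, shf d (x - a) :=
        Finset.single_le_sum (f := fun a => shf d (x - a)) (fun a _ => shf_nonneg _) hx
      have h0 : shf d (x - x) = 1 / d := by simp [shf]
      rw [h0] at this
      have := mul_le_mul_of_nonneg_left this hd0.le
      rw [mul_one_div_cancel hd0.ne'] at this
      linarith
    · rw [prob_zero]
      · have : 0 ≤ ∑ a ∈ A, shf d (x - a) := Finset.sum_nonneg (fun a _ => shf_nonneg _)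
        nlinarith
      · intro t ht
        have : t = 0 := by omega
        subst this
        rw [wpos_zero]; exact_mod_cast hx
  | succ T ih =>
    by_cases hx : x ∈ A
    · refine le_trans ?_ (prob_nonneg _ _ _)
      have : shf d (x - x) ≤ ∑ a ∈ A, shf d (x - a) :=
        Finset.single_le_sum (f := fun a => shf d (x - a)) (fun a _ => shf_nonneg _) hx
      have h0 : shf d (x - x) = 1 / d := by simp [shf]
      rw [h0] at this
      have := mul_le_mul_of_nonneg_left this hd0.le
      rw [mul_one_div_cancel hd0.ne'] at this
      linarith
    · rw [prob_cons]
      have h2 : (0 : ℝ) < ((2 * d : ℕ) : ℝ) := by push_cast; positivity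
      have hcong : ∀ e : Pt d, 1 - d * ∑ a ∈ A, shf d (x + e - a) ≤
          prob d T (fun s => ∀ t, t ≤ T + 1 →
            wpos d x (Fin.cons e s : Fin (T + 1) → Pt d) t ∉ (A : Set (Pt d))) := by
        intro e
        refine (ih (x + e)).trans (prob_mono ?_)
        intro s _ h t ht
        cases t with
        | zero => rw [wpos_zero]; exact_mod_cast hx
        | succ t => rw [wpos_cons]; exact h t (by omega)
      rw [le_div_iff₀ h2]
      refine le_trans ?_ (Finset.sum_le_sum (fun e _ => hcong e))
      rw [Finset.sum_sub_distrib, ← Finset.mul_sum, Finset.sum_comm]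
      have : ∑ a ∈ A, ∑ e ∈ dirF d, shf d (x + e - a) ≤
          ∑ a ∈ A, shf d (x - a) * ((2 * d : ℕ) : ℝ) := by
        apply Finset.sum_le_sum
        intro a _
        have := shf_super hd (x - a)
        rw [div_le_iff₀ h2] at this
        refine le_trans (le_of_eq ?_) this
        apply Finset.sum_congr rfl
        intro e _
        congr 1; abel
      rw [← Finset.sum_mul] at this
      have := mul_le_mul_of_nonneg_left this hd0.le
      simp only [Finset.sum_const, nsmul_eq_mul, card_dirF]
      nlinarith

lemma exists_good_coord {d : ℕ} (hd : 5 ≤ d) (B : Finset (Pt d)) (hB : B.card ≤ 3) :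
    ∃ i : Fin d, ∀ b ∈ B, 2 * (b i : ℝ) ^ 2 ≤ ∑ j, (b j : ℝ) ^ 2 := by
  classical
  by_contra hcon
  push Not at hcon
  let bad : Pt d → Finset (Fin d) := fun b =>
    Finset.univ.filter (fun i => ∑ j, (b j : ℝ) ^ 2 < 2 * (b i : ℝ) ^ 2)
  have h1 : ∀ b ∈ B, (bad b).card ≤ 1 := by
    intro b _
    rw [Finset.card_le_one]
    intro i hi k hk
    by_contra hik
    simp only [bad, Finset.mem_filter, Finset.mem_univ, true_and] at hi hk
    have := Finset.sum_le_sum_of_subset_of_nonneg (f := fun j => (b j : ℝ) ^ 2)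
      (Finset.subset_univ ({i, k} : Finset (Fin d))) (fun j _ _ => sq_nonneg _)
    rw [Finset.sum_pair hik] at this
    linarith
  have h2 : (Finset.univ : Finset (Fin d)) ⊆ B.biUnion bad := by
    intro i _
    obtain ⟨b, hb, hbi⟩ := hcon i
    simp only [Finset.mem_biUnion, bad, Finset.mem_filter, Finset.mem_univ, true_and]
    exact ⟨b, hb, hbi⟩
  have h3 := Finset.card_le_card h2
  have h4 := Finset.card_biUnion_le_card_mul B bad 1 h1
  simp at h3
  omega

/-- The uniform lower bound for escape probabilities. -/
noncomputable def escLB (d : ℕ) : ℝ := (1 / 2) * (1 / ((2 * d : ℕ) : ℝ)) ^ (12 * d)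

lemma escLB_pos {d : ℕ} (hd : 5 ≤ d) : 0 < escLB d := by
  unfold escLB
  have : (0 : ℝ) < ((2 * d : ℕ) : ℝ) := by
    have : 0 < 2 * d := by omega
    exact_mod_cast this
  positivity

lemma avoid_line {d : ℕ} (hd : 5 ≤ d) (A : Finset (Pt d)) (hA : A.card ≤ 3) (x : Pt d)
    (i : Fin d) (hi : ∀ a ∈ A, 2 * ((a - x) i : ℝ) ^ 2 ≤ ∑ j, ((a - x) j : ℝ) ^ 2)
    (m : ℕ) (k : ℕ) (hk : 1 ≤ k) (hkm : k + m = 12 * d) (T : ℕ) :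
    (1 / 2) * (1 / ((2 * d : ℕ) : ℝ)) ^ m ≤
      prob d T (fun s => ∀ t, t ≤ T →
        wpos d (x + Pi.single i (k : ℤ)) s t ∉ (A : Set (Pt d))) := by
  have hd0 : (0 : ℝ) < ((2 * d : ℕ) : ℝ) := by
    have : 0 < 2 * d := by omega
    exact_mod_cast this
  have hd1 : (5 : ℝ) ≤ d := by exact_mod_cast hd
  have hq1 : 1 / ((2 * d : ℕ) : ℝ) ≤ 1 := by
    rw [div_le_one hd0]; push_cast; linarith
  have hdist : ∀ a ∈ A, ∀ r : ℕ, (r : ℝ) ^ 2 ≤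
      2 * ∑ j, (((x + Pi.single i (r : ℤ) - a : Pt d) j : ℤ) : ℝ) ^ 2 := by
    intro a ha r
    have h1 := hi a ha
    have h2 := shf_single (x - a) i (r : ℤ)
    have e : x + Pi.single i (r : ℤ) - a = x - a + Pi.single i (r : ℤ) := by abel
    rw [e, h2]
    have h3 : ∑ j, (((a - x) j : ℤ) : ℝ) ^ 2 = ∑ j, (((x - a) j : ℤ) : ℝ) ^ 2 := by
      apply Finset.sum_congr rfl
      intro j _
      simp only [Pi.sub_apply]; push_cast; ring
    rw [← h3]
    have h4 : (((x - a) i : ℤ) : ℝ) = - (((a - x) i : ℤ) : ℝ) := by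
      simp only [Pi.sub_apply]; push_cast; ring
    rw [h4]
    push_cast at h1 ⊢
    nlinarith [sq_nonneg (2 * (((a - x) i : ℤ) : ℝ) - r)]
  induction m generalizing k T with
  | zero =>
    refine le_trans ?_ (avoid_ge hd A T _)
    have hk' : k = 12 * d := by omega
    have hb : ∀ a ∈ A, shf d (x + Pi.single i (k : ℤ) - a) ≤ 1 / (6 * d) := by
      intro a ha
      have := hdist a ha k
      unfold shf
      rw [hk'] at this ⊢
      apply one_div_le_one_div_of_le (by positivity)
      push_cast at this ⊢
      nlinarith
    have hs := Finset.sum_le_card_nsmul A _ _ hb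
    rw [nsmul_eq_mul] at hs
    have hA' : (A.card : ℝ) ≤ 3 := by exact_mod_cast hA
    have : (A.card : ℝ) * (1 / (6 * d)) ≤ 3 * (1 / (6 * d)) := by gcongr
    have h5 : (d : ℝ) * ∑ a ∈ A, shf d (x + Pi.single i (k : ℤ) - a) ≤
      d * (3 * (1 / (6 * d))) := by gcongr; linarith
    have h6 : (d : ℝ) * (3 * (1 / (6 * d))) = 1 / 2 := by field_simp; norm_num
    simp only [pow_zero]
    linarith
  | succ m ih =>
    have hnot : x + Pi.single i (k : ℤ) ∉ A := by
      intro ha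
      have := hdist _ ha k
      simp only [sub_self, Pi.zero_apply, Int.cast_zero] at this
      have hk' : (1 : ℝ) ≤ k := by exact_mod_cast hk
      norm_num at this
      nlinarith
    cases T with
    | zero =>
      rw [prob_zero]
      · have : (1 / ((2 * d : ℕ) : ℝ)) ^ (m + 1) ≤ 1 := pow_le_one₀ (by positivity) hq1
        linarith
      · intro t ht
        have : t = 0 := by omega
        subst this
        rw [wpos_zero]; exact_mod_cast hnot
    | succ T =>
      have h := ih (k + 1) (by omega) (by omega) T
      rw [prob_cons]
      refine le_trans ?_ (avg_ge (by omega) _ (fun e => prob_nonneg _ _ _) (Pi.single i 1) ⟨i, Or.inl rfl⟩)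
      have : (1 / 2) * (1 / ((2 * d : ℕ) : ℝ)) ^ (m + 1) =
        ((1 / 2) * (1 / ((2 * d : ℕ) : ℝ)) ^ m) / ((2 * d : ℕ) : ℝ) := by
        rw [pow_succ]; ring
      rw [this]
      gcongr
      refine h.trans (prob_mono ?_)
      intro s _ hs t ht
      cases t with
      | zero => rw [wpos_zero]; exact_mod_cast hnot
      | succ t =>
        rw [wpos_cons]
        have := hs t (by omega)
        have e : x + Pi.single i (k : ℤ) + Pi.single i 1 =
            x + Pi.single i (((k + 1 : ℕ) : ℤ)) := by
          rw [add_assoc, ← Pi.single_add]; push_cast; rfl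
        rwa [e]

lemma esc_ge {d : ℕ} (hd : 5 ≤ d) (A : Finset (Pt d)) (hA : A.card ≤ 3) (x : Pt d)
    (hx : x ∈ A) : escLB d ≤ esc d (A : Set (Pt d)) x := by
  classical
  obtain ⟨i, hi⟩ := exists_good_coord hd (A.image (fun a => a - x))
    (Finset.card_image_le.trans hA)
  have hi' : ∀ a ∈ A, 2 * ((a - x) i : ℝ) ^ 2 ≤ ∑ j, ((a - x) j : ℝ) ^ 2 :=
    fun a ha => hi (a - x) (Finset.mem_image_of_mem _ ha)
  have hd0 : (0 : ℝ) < ((2 * d : ℕ) : ℝ) := by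
    have : 0 < 2 * d := by omega
    exact_mod_cast this
  have hd1 : (5 : ℝ) ≤ d := by exact_mod_cast hd
  have hq1 : 1 / ((2 * d : ℕ) : ℝ) ≤ 1 := by
    rw [div_le_one hd0]; push_cast; linarith
  unfold esc
  rw [if_pos (by exact_mod_cast hx)]
  apply le_ciInf
  intro T
  cases T with
  | zero =>
    rw [prob_zero]
    · unfold escLB
      have : (1 / ((2 * d : ℕ) : ℝ)) ^ (12 * d) ≤ 1 := pow_le_one₀ (by positivity) hq1
      linarith
    · intro t h1 h2; omega
  | succ T =>
    rw [prob_cons]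
    refine le_trans ?_ (avg_ge (by omega) _ (fun e => prob_nonneg _ _ _) (Pi.single i 1) ⟨i, Or.inl rfl⟩)
    have h := avoid_line hd A hA x i hi' (12 * d - 1) 1 le_rfl (by omega) T
    have e : escLB d = ((1 / 2) * (1 / ((2 * d : ℕ) : ℝ)) ^ (12 * d - 1)) / ((2 * d : ℕ) : ℝ) := by
      unfold escLB
      obtain ⟨m, hm⟩ : ∃ m, 12 * d = m + 1 := ⟨12 * d - 1, by omega⟩
      rw [hm, Nat.add_sub_cancel, pow_succ]; ring
    rw [e]
    gcongr
    refine h.trans (prob_mono ?_)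
    intro s _ hs t h1 ht
    obtain ⟨t, rfl⟩ : ∃ u, t = u + 1 := ⟨t - 1, by omega⟩
    rw [wpos_cons]
    have := hs t (by omega)
    simpa using this

lemma esc_nonneg {d : ℕ} (A : Set (Pt d)) (x : Pt d) : 0 ≤ esc d A x := by
  unfold esc
  split_ifs
  · exact le_ciInf (fun T => prob_nonneg _ _ _)
  · exact le_rfl

lemma esc_le_one {d : ℕ} (hd : 0 < d) (A : Set (Pt d)) (x : Pt d) : esc d A x ≤ 1 := by
  unfold esc
  split_ifs
  · exact ciInf_le_of_le ⟨0, by rintro _ ⟨T, rfl⟩; exact prob_nonneg _ _ _⟩ 0 (prob_le_one hd _ _)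
  · norm_num

lemma capa_eq {d : ℕ} (A : Finset (Pt d)) :
    capa d (A : Set (Pt d)) = ∑ x ∈ A, esc d (A : Set (Pt d)) x := by
  unfold capa
  exact Finset.tsum_subtype A (fun x => esc d (A : Set (Pt d)) x)

end Escape
section Hitting

/-- Killed kernel. -/
noncomputable def kk (d : ℕ) (W : Set (Pt d)) (x : Pt d) (t : ℕ) (z : Pt d) : ℝ :=
  prob d t (fun s => wpos d x s t = z ∧ ∀ u, 1 ≤ u → u ≤ t → wpos d x s u ∉ W)

/-- Terms of `hitFrom`. -/
noncomputable def hT (d : ℕ) (W : Set (Pt d)) (x y : Pt d) (t : ℕ) : ℝ :=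
  prob d t (fun s => 1 ≤ t ∧ wpos d x s t ∈ W ∧ wpos d x s (t - 1) = y ∧
    ∀ u, 1 ≤ u → u < t → wpos d x s u ∉ W)

/-- Terms of `retProb`. -/
noncomputable def rT (d : ℕ) (W : Set (Pt d)) (x : Pt d) (t : ℕ) : ℝ :=
  prob d t (fun s => 1 ≤ t ∧ wpos d x s t ∈ W ∧
    ∀ u, 1 ≤ u → u < t → wpos d x s u ∉ W)

/-- Survival probability. -/
noncomputable def sv (d : ℕ) (W : Set (Pt d)) (x : Pt d) (t : ℕ) : ℝ :=
  prob d t (fun s => ∀ u, 1 ≤ u → u ≤ t → wpos d x s u ∉ W)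

lemma prob_false {d T : ℕ} (P : (Fin T → Pt d) → Prop) (h : ∀ s, ¬ P s) : prob d T P = 0 := by
  classical
  rw [prob_eq]
  rw [Finset.filter_false_of_mem (fun s _ => h s)]
  simp

lemma exists_of_prob_ne {d T : ℕ} {P : (Fin T → Pt d) → Prop} (h : prob d T P ≠ 0) :
    ∃ s, P s := by
  by_contra hc
  push Not at hc
  exact h (prob_false P hc)

lemma rT_zero {d : ℕ} (W : Set (Pt d)) (x : Pt d) : rT d W x 0 = 0 :=
  prob_false _ (fun s h => by omega)

lemma hT_zero {d : ℕ} (W : Set (Pt d)) (x y : Pt d) : hT d W x y 0 = 0 :=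
  prob_false _ (fun s h => by omega)

lemma sv_step {d : ℕ} (hd : 0 < d) (W : Set (Pt d)) (x : Pt d) (T : ℕ) :
    sv d W x (T + 1) + rT d W x (T + 1) ≤ sv d W x T := by
  have h : sv d W x T = prob d (T + 1)
      (fun s => ∀ u, 1 ≤ u → u ≤ T → wpos d x s u ∉ W) := by
    symm
    apply prob_ext_snoc hd
    intro s e
    constructor
    · intro h u h1 h2
      have := h u h1 h2
      rwa [wpos_snoc _ _ _ _ h2] at this
    · intro h u h1 h2
      rw [wpos_snoc _ _ _ _ h2]; exact h u h1 h2
  rw [h]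
  apply prob_add_le
  · intro s hs u h1 h2
    exact hs u h1 (by omega)
  · intro s hs u h1 h2
    exact hs.2.2 u h1 (by omega)
  · intro s hs hs'
    exact hs (T + 1) (by omega) le_rfl hs'.2.1

lemma sum_rT {d : ℕ} (hd : 0 < d) (W : Set (Pt d)) (x : Pt d) (T : ℕ) :
    ∑ t ∈ Finset.range (T + 1), rT d W x t + sv d W x T ≤ 1 := by
  induction T with
  | zero =>
    simp only [zero_add, Finset.range_one, Finset.sum_singleton, rT_zero]
    exact prob_le_one hd _ _
  | succ T ih =>
    rw [Finset.sum_range_succ]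
    have := sv_step hd W x T
    linarith

lemma summable_rT {d : ℕ} (hd : 0 < d) (W : Set (Pt d)) (x : Pt d) : Summable (rT d W x) := by
  refine summable_of_sum_range_le (c := 1) (fun t => prob_nonneg _ _ _) (fun T => ?_)
  have h := sum_rT hd W x T
  have h0 : 0 ≤ sv d W x T := prob_nonneg _ _ _
  have h1 : 0 ≤ rT d W x T := prob_nonneg _ _ _
  rw [Finset.sum_range_succ] at h
  linarith

lemma hT_le_rT {d : ℕ} (W : Set (Pt d)) (x y : Pt d) (t : ℕ) : hT d W x y t ≤ rT d W x t :=
  prob_mono (fun _ _ h => ⟨h.1, h.2.1, h.2.2.2⟩)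

lemma summable_hT {d : ℕ} (hd : 0 < d) (W : Set (Pt d)) (x y : Pt d) :
    Summable (hT d W x y) :=
  Summable.of_nonneg_of_le (fun _ => prob_nonneg _ _ _) (hT_le_rT W x y) (summable_rT hd W x)

lemma kk_step {d : ℕ} (hd : 0 < d) (W : Set (Pt d)) (x : Pt d) (t : ℕ) (z e : Pt d)
    (he : e ∈ Dir d) (hz : z + e ∉ W) :
    1 / ((2 * d : ℕ) : ℝ) * kk d W x t z ≤ kk d W x (t + 1) (z + e) := by
  have h := avg_ge hd (fun e' => prob d t (fun s =>
    wpos d x (Fin.snoc s e' : Fin (t + 1) → Pt d) (t + 1) = z + e ∧ ∀ u, 1 ≤ u → u ≤ t + 1 →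
      wpos d x (Fin.snoc s e' : Fin (t + 1) → Pt d) u ∉ W)) (fun _ => prob_nonneg _ _ _) e he
  unfold kk
  rw [prob_snoc d t]
  refine le_trans ?_ h
  rw [one_div_mul_eq_div]
  gcongr
  apply prob_mono
  rintro s - ⟨h1, h2⟩
  refine ⟨by rw [wpos_snoc_last, h1], fun u hu hu' => ?_⟩
  rcases Nat.lt_or_ge t u with h3 | h3
  · have : u = t + 1 := by omega
    subst this
    rw [wpos_snoc_last, h1]; exact hz
  · rw [wpos_snoc _ _ _ _ h3]; exact h2 u hu h3

lemma hT_ge {d : ℕ} (hd : 0 < d) (W : Set (Pt d)) (x : Pt d) (t : ℕ) (y e : Pt d)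
    (he : e ∈ Dir d) (hz : y + e ∈ W) :
    1 / ((2 * d : ℕ) : ℝ) * kk d W x t y ≤ hT d W x y (t + 1) := by
  unfold kk hT
  rw [prob_snoc d t]
  refine le_trans ?_ (avg_ge hd _ (fun _ => prob_nonneg _ _ _) e he)
  rw [one_div_mul_eq_div]
  gcongr
  apply prob_mono
  rintro s - ⟨h1, h2⟩
  refine ⟨by omega, by rw [wpos_snoc_last, h1]; exact hz, ?_, fun u hu hu' => ?_⟩
  · rw [Nat.add_sub_cancel, wpos_snoc _ _ _ _ le_rfl, h1]
  · rw [wpos_snoc _ _ _ _ (by omega)]; exact h2 u hu (by omega)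

lemma hT_le {d : ℕ} (hd : 0 < d) (W : Set (Pt d)) (x : Pt d) (t : ℕ) (y : Pt d) :
    hT d W x y (t + 1) ≤ kk d W x t y := by
  unfold kk hT
  rw [prob_snoc d t]
  apply avg_le hd
  intro e
  apply prob_mono
  rintro s - ⟨-, -, h1, h2⟩
  rw [Nat.add_sub_cancel, wpos_snoc _ _ _ _ le_rfl] at h1
  refine ⟨h1, fun u hu hu' => ?_⟩
  have := h2 u hu (by omega)
  rwa [wpos_snoc _ _ _ _ hu'] at this

lemma hit_compare {d : ℕ} (hd : 0 < d) (W : Set (Pt d)) (x y y' e : Pt d) (c : ℝ) (hc : 0 ≤ c)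
    (L : ℕ) (h : ∀ t, c * kk d W x t y' ≤ kk d W x (t + L) y) (he : e ∈ Dir d)
    (hy : y + e ∈ W) :
    c * (1 / ((2 * d : ℕ) : ℝ)) * hitFrom d W x y' ≤ hitFrom d W x y := by
  have s1 := summable_hT hd W x y'
  have s2 := summable_hT hd W x y
  change c * (1 / ((2 * d : ℕ) : ℝ)) * ∑' t, hT d W x y' t ≤ ∑' t, hT d W x y t
  rw [s1.tsum_eq_zero_add, hT_zero, zero_add, ← tsum_mul_left]
  have s3 : Summable (fun t => hT d W x y (t + (L + 1))) := (summable_nat_add_iff _).mpr s2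
  have s4 : Summable (fun t => hT d W x y' (t + 1)) := (summable_nat_add_iff 1).mpr s1
  refine le_trans (Summable.tsum_le_tsum (g := fun t => hT d W x y (t + (L + 1))) ?_
    (s4.mul_left _) s3) ?_
  · intro t
    have h1 := hT_le hd W x t y'
    have h2 := hT_ge hd W x (t + L) y e he hy
    have h3 := h t
    have hq : 0 ≤ 1 / ((2 * d : ℕ) : ℝ) := by positivity
    calc c * (1 / ((2 * d : ℕ) : ℝ)) * hT d W x y' (t + 1)
        ≤ c * (1 / ((2 * d : ℕ) : ℝ)) * kk d W x t y' := by gcongr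
      _ = (1 / ((2 * d : ℕ) : ℝ)) * (c * kk d W x t y') := by ring
      _ ≤ (1 / ((2 * d : ℕ) : ℝ)) * kk d W x (t + L) y := by gcongr
      _ ≤ hT d W x y (t + (L + 1)) := h2
  · rw [← s2.sum_add_tsum_nat_add (L + 1)]
    have : 0 ≤ ∑ i ∈ Finset.range (L + 1), hT d W x y i :=
      Finset.sum_nonneg (fun _ _ => prob_nonneg _ _ _)
    linarith

lemma reach_all {d : ℕ} (S : Pt d → Prop) (x : Pt d) (hx : S x)
    (hS : ∀ z e, e ∈ Dir d → S z → S (z + e)) (z : Pt d) : S z := by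
  classical
  have h1 : ∀ (i : Fin d) (c : ℤ) (z : Pt d), S z → S (z + Pi.single i c) := by
    intro i c
    induction c using Int.induction_on with
    | zero => intro z hz; simpa using hz
    | succ n ih =>
      intro z hz
      have := hS _ (Pi.single i 1) ⟨i, Or.inl rfl⟩ (ih z hz)
      rwa [add_assoc, ← Pi.single_add] at this
    | pred n ih =>
      intro z hz
      have := hS _ (Pi.single i (-1)) ⟨i, Or.inr rfl⟩ (ih z hz)
      rwa [add_assoc, ← Pi.single_add] at this
  have h2 : ∀ (F : Finset (Fin d)) (v : Pt d) (z : Pt d), S z →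
      S (z + ∑ i ∈ F, Pi.single i (v i)) := by
    intro F v
    induction F using Finset.induction_on with
    | empty => intro z hz; simpa using hz
    | insert i F hi ih =>
      intro z hz
      rw [Finset.sum_insert hi, ← add_assoc]
      exact ih _ (h1 i _ z hz)
  have := h2 Finset.univ (z - x) x hx
  rw [Finset.univ_sum_single] at this
  simpa using this

lemma retProb_pos {d : ℕ} (hd : 0 < d) (W : Set (Pt d)) (x w : Pt d) (hw : w ∈ W) (hx : x ∉ W) :
    0 < retProb d W x := by
  have hs := summable_rT hd W x
  have hd0 : (0 : ℝ) < ((2 * d : ℕ) : ℝ) := by positivity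
  by_contra hcon
  have hr : ∀ t, rT d W x t = 0 := by
    intro t
    have h0 : rT d W x t ≤ ∑' t, rT d W x t := hs.le_tsum t (fun _ _ => prob_nonneg _ _ _)
    have h1 : 0 ≤ rT d W x t := prob_nonneg _ _ _
    have h2 : ¬ 0 < ∑' t, rT d W x t := hcon
    linarith
  have hall := reach_all (fun z => ∃ t, 0 < kk d W x t z) x ⟨0, by
    unfold kk
    rw [prob_zero]
    · norm_num
    · exact ⟨wpos_zero _ _, fun u h1 h2 => by omega⟩⟩ (by
    rintro z e he ⟨t, ht⟩
    have hp : 0 < 1 / ((2 * d : ℕ) : ℝ) * kk d W x t z := by positivity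
    by_cases hz : z + e ∈ W
    · exfalso
      have h1 := hT_ge hd W x t z e he hz
      have h2 := hT_le_rT W x z (t + 1)
      rw [hr] at h2
      linarith
    · exact ⟨t + 1, lt_of_lt_of_le hp (kk_step hd W x t z e he hz)⟩) w
  obtain ⟨t, ht⟩ := hall
  obtain ⟨s, h1, h2⟩ := exists_of_prob_ne ht.ne'
  cases t with
  | zero => rw [wpos_zero] at h1; rw [h1] at hx; exact hx hw
  | succ t => exact h2 (t + 1) (by omega) le_rfl (h1 ▸ hw)

lemma not_mem_of_hit {d : ℕ} (W : Set (Pt d)) (x y : Pt d) (hx : x ∉ W)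
    (h : hitFrom d W x y ≠ 0) : y ∉ W := by
  obtain ⟨t, ht⟩ : ∃ t, hT d W x y t ≠ 0 := by
    by_contra hc
    push Not at hc
    apply h
    change ∑' t, hT d W x y t = 0
    simp [hc]
  obtain ⟨s, h1, h2, h3, h4⟩ := exists_of_prob_ne ht
  rcases Nat.lt_or_ge 1 t with h5 | h5
  · rw [← h3]; exact h4 _ (by omega) (by omega)
  · have : t = 1 := by omega
    subst this
    simp only [Nat.sub_self, wpos_zero] at h3
    rwa [← h3]

lemma rT_le_sum {d : ℕ} (W : Finset (Pt d)) (x : Pt d) (t : ℕ) :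
    rT d (W : Set (Pt d)) x t ≤
      ∑ p ∈ W ×ˢ dirF d, hT d (W : Set (Pt d)) x (p.1 - p.2) t := by
  unfold rT hT
  apply prob_le_sum
  rintro s hs ⟨h1, h2, h3⟩
  obtain ⟨t, rfl⟩ : ∃ u, t = u + 1 := ⟨t - 1, by omega⟩
  have hlast : wpos d x s (t + 1) = wpos d x s t + s (Fin.last t) := by
    have h := wpos_snoc_last x (s (Fin.last t)) (Fin.init s)
    have h' := wpos_snoc x (s (Fin.last t)) (Fin.init s) t le_rfl
    rw [Fin.snoc_init_self] at h h'
    rw [h, h']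
  refine ⟨(wpos d x s (t + 1), s (Fin.last t)), ?_, h1, h2, ?_, h3⟩
  · rw [Finset.mem_product]
    exact ⟨by exact_mod_cast h2, mem_dirF.mpr (hs _)⟩
  · rw [hlast]; simp

lemma exists_move {d : ℕ} (hd : 0 < d) (W : Finset (Pt d)) (hW : W.Nonempty) (hW2 : W.card ≤ 2)
    (x : Pt d) (hx : x ∉ W) :
    ∃ y' e, e ∈ Dir d ∧ y' + e ∈ W ∧ y' ∉ W ∧
      1 / ((4 * d : ℕ) : ℝ) * retProb d (W : Set (Pt d)) x ≤ hitFrom d (W : Set (Pt d)) x y' := by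
  obtain ⟨w, hw⟩ := hW
  have hx' : x ∉ (W : Set (Pt d)) := by exact_mod_cast hx
  have hpos := retProb_pos hd (W : Set (Pt d)) x w (by exact_mod_cast hw) hx'
  have h4 : (0 : ℝ) < ((4 * d : ℕ) : ℝ) := by positivity
  have hle : retProb d (W : Set (Pt d)) x ≤
      ∑ p ∈ W ×ˢ dirF d, hitFrom d (W : Set (Pt d)) x (p.1 - p.2) := by
    change ∑' t, rT d (W : Set (Pt d)) x t ≤
      ∑ p ∈ W ×ˢ dirF d, ∑' t, hT d (W : Set (Pt d)) x (p.1 - p.2) t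
    rw [← Summable.tsum_finsetSum (fun p _ => summable_hT hd _ _ _)]
    exact Summable.tsum_le_tsum (rT_le_sum W x) (summable_rT hd _ _)
      (summable_sum (fun p _ => summable_hT hd _ _ _))
  by_contra hcon
  push Not at hcon
  have hsmall : ∀ p ∈ W ×ˢ dirF d, hitFrom d (W : Set (Pt d)) x (p.1 - p.2) <
      1 / ((4 * d : ℕ) : ℝ) * retProb d (W : Set (Pt d)) x := by
    intro p hp
    rw [Finset.mem_product] at hp
    by_cases hmem : p.1 - p.2 ∈ W
    · have : hitFrom d (W : Set (Pt d)) x (p.1 - p.2) = 0 := by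
        by_contra h
        exact not_mem_of_hit _ _ _ hx' h (by exact_mod_cast hmem)
      rw [this]; positivity
    · exact hcon _ p.2 (mem_dirF.mp hp.2) (by simpa using hp.1) hmem
  have hne : (W ×ˢ dirF d).Nonempty := by
    refine ⟨(w, Pi.single ⟨0, hd⟩ 1), ?_⟩
    rw [Finset.mem_product]
    exact ⟨hw, mem_dirF.mpr ⟨_, Or.inl rfl⟩⟩
  have hlt := Finset.sum_lt_sum_of_nonempty hne hsmall
  rw [Finset.sum_const, nsmul_eq_mul, Finset.card_product] at hlt
  push_cast at hlt
  rw [card_dirF] at hlt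
  have hW2' : (W.card : ℝ) ≤ 2 := by exact_mod_cast hW2
  have : (W.card : ℝ) * ((2 * d : ℕ) : ℝ) * (1 / (4 * (d : ℝ)) * retProb d (W : Set (Pt d)) x) ≤
      2 * ((2 * d : ℕ) : ℝ) * (1 / (4 * (d : ℝ)) * retProb d (W : Set (Pt d)) x) := by
    gcongr
  have e : 2 * ((2 * d : ℕ) : ℝ) * (1 / (4 * (d : ℝ)) * retProb d (W : Set (Pt d)) x) =
      retProb d (W : Set (Pt d)) x := by
    push_cast
    field_simp
    ring
  linarith

/-- Two-step reachability avoiding `W`. -/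
def Reach2 (d : ℕ) (W : Finset (Pt d)) (y' y : Pt d) : Prop :=
  y = y' ∨ ∃ a b, a ∈ Dir d ∧ b ∈ Dir d ∧ y = y' + a + b ∧ y' + a ∉ W ∧ y ∉ W

/-- Transport lower bound. -/
noncomputable def mB (d : ℕ) : ℝ :=
  (1 / ((2 * d : ℕ) : ℝ)) ^ 2 * (1 / ((2 * d : ℕ) : ℝ)) * (1 / ((4 * d : ℕ) : ℝ))

lemma mB_pos {d : ℕ} (hd : 0 < d) : 0 < mB d := by
  unfold mB; positivity

lemma transP_ge {d : ℕ} (hd : 0 < d) (W : Finset (Pt d)) (x y' y e : Pt d) (hx : x ∉ W)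
    (h : 1 / ((4 * d : ℕ) : ℝ) * retProb d (W : Set (Pt d)) x ≤ hitFrom d (W : Set (Pt d)) x y')
    (hr : Reach2 d W y' y) (he : e ∈ Dir d) (hy : y + e ∈ W) :
    mB d ≤ transP d (W : Set (Pt d)) x y := by
  have hx' : x ∉ (W : Set (Pt d)) := by exact_mod_cast hx
  have hpos := retProb_pos hd (W : Set (Pt d)) x (y + e) (by exact_mod_cast hy) hx'
  have hd0 : (0 : ℝ) < ((2 * d : ℕ) : ℝ) := by positivity
  have hq1 : 1 / ((2 * d : ℕ) : ℝ) ≤ 1 := by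
    rw [div_le_one hd0]
    have : 1 ≤ 2 * d := by omega
    exact_mod_cast this
  have hq0 : 0 ≤ 1 / ((2 * d : ℕ) : ℝ) := by positivity
  have hL : ∃ L, ∀ t, (1 / ((2 * d : ℕ) : ℝ)) ^ 2 * kk d (W : Set (Pt d)) x t y' ≤
      kk d (W : Set (Pt d)) x (t + L) y := by
    rcases hr with rfl | ⟨a, b, ha, hb, rfl, h1, h2⟩
    · refine ⟨0, fun t => ?_⟩
      have h0 : 0 ≤ kk d (W : Set (Pt d)) x t y := prob_nonneg _ _ _
      have : (1 / ((2 * d : ℕ) : ℝ)) ^ 2 ≤ 1 := pow_le_one₀ hq0 hq1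
      simpa using mul_le_of_le_one_left h0 this
    · refine ⟨2, fun t => ?_⟩
      have k1 := kk_step hd (W : Set (Pt d)) x t y' a ha (by exact_mod_cast h1)
      have k2 := kk_step hd (W : Set (Pt d)) x (t + 1) (y' + a) b hb (by exact_mod_cast h2)
      refine le_trans ?_ k2
      rw [pow_two, mul_assoc]
      gcongr
  obtain ⟨L, hL⟩ := hL
  have hc := hit_compare hd (W : Set (Pt d)) x y y' e _ (by positivity) L hL he
    (by exact_mod_cast hy)
  unfold transP
  rw [le_div_iff₀ hpos]
  refine le_trans ?_ hc
  unfold mB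
  rw [mul_assoc]
  gcongr

end Hitting
section Moves

/-- The cluster contains a pair `v, v + e₁`. -/
def Pre (d : ℕ) (A : Finset (Pt d)) : Prop := ∃ v, v ∈ A ∧ v + e1v d ∈ A

lemma e1v_mem {d : ℕ} (hd : 0 < d) : e1v d ∈ Dir d := by
  refine ⟨⟨0, hd⟩, Or.inl ?_⟩
  ext i
  by_cases h : i = ⟨0, hd⟩
  · subst h; simp [e1v]
  · have : (i : ℕ) ≠ 0 := fun h' => h (Fin.ext h')
    simp [e1v, h, this]

lemma Dir_neg {d : ℕ} {e : Pt d} (he : e ∈ Dir d) : -e ∈ Dir d := by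
  obtain ⟨i, rfl | rfl⟩ := he
  · exact ⟨i, Or.inr (by rw [← Pi.single_neg])⟩
  · exact ⟨i, Or.inl (by rw [← Pi.single_neg]; simp)⟩

lemma Dir_coord {d : ℕ} {e : Pt d} (he : e ∈ Dir d) (i : Fin d) : |e i| ≤ 1 := by
  classical
  obtain ⟨k, rfl | rfl⟩ := he <;> by_cases h : i = k <;> simp [Pi.single_apply, h]

lemma e1v_zero {d : ℕ} (hd : 0 < d) : e1v d ⟨0, hd⟩ = 1 := by simp [e1v]

lemma geomA {d : ℕ} (hd : 0 < d) (W : Finset (Pt d)) (hW : W.card ≤ 2) (y' g : Pt d)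
    (hy' : y' ∉ W) (hg : g ∈ Dir d) (hw : y' + g ∈ W) :
    ∃ y e, Reach2 d W y' y ∧ y ∉ W ∧ e ∈ Dir d ∧ y + e ∈ W ∧ Pre d (insert y W) := by
  have he1 := e1v_mem hd
  have he0 := e1v_zero hd
  by_cases hpre : Pre d W
  · obtain ⟨v, h1, h2⟩ := hpre
    exact ⟨y', g, Or.inl rfl, hy', hg, hw, v, Finset.mem_insert_of_mem h1,
      Finset.mem_insert_of_mem h2⟩
  by_cases hg1 : g = e1v d
  · exact ⟨y', g, Or.inl rfl, hy', hg, hw, y', Finset.mem_insert_self _ _,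
      Finset.mem_insert_of_mem (hg1 ▸ hw)⟩
  by_cases hg2 : g = -e1v d
  · refine ⟨y', g, Or.inl rfl, hy', hg, hw, y' + g, Finset.mem_insert_of_mem hw, ?_⟩
    rw [hg2]; simp
  by_cases hmid : y' + e1v d ∈ W
  · have hmem : ∀ z ∈ W, z = y' + g ∨ z = y' + e1v d := by
      intro z hz
      by_contra hc
      push Not at hc
      have hsub : ({z, y' + g, y' + e1v d} : Finset (Pt d)) ⊆ W := by
        intro a ha
        simp only [Finset.mem_insert, Finset.mem_singleton] at ha
        rcases ha with rfl | rfl | rfl <;> assumption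
      have := Finset.card_le_card hsub
      rw [Finset.card_eq_three.mpr ⟨z, y' + g, y' + e1v d, hc.1, hc.2, by simpa using hg1, rfl⟩]
        at this
      omega
    have hy : y' + -e1v d + g ∉ W := by
      intro h
      apply hpre
      refine ⟨_, h, ?_⟩
      have : y' + -e1v d + g + e1v d = y' + g := by abel
      rw [this]; exact hw
    refine ⟨y' + -e1v d + g, e1v d, Or.inr ⟨-e1v d, g, Dir_neg he1, hg, rfl, ?_, hy⟩, hy, he1,
      ?_, ?_⟩
    · intro h
      rcases hmem _ h with h | h
      · exact hg2 (add_left_cancel h).symm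
      · have := congrFun (add_left_cancel h) ⟨0, hd⟩
        rw [Pi.neg_apply, he0] at this
        omega
    · have : y' + -e1v d + g + e1v d = y' + g := by abel
      rw [this]; exact hw
    · refine ⟨_, Finset.mem_insert_self _ _, Finset.mem_insert_of_mem ?_⟩
      have : y' + -e1v d + g + e1v d = y' + g := by abel
      rw [this]; exact hw
  · have hy : y' + e1v d + g ∉ W := by
      intro h
      apply hpre
      refine ⟨_, hw, ?_⟩
      have : y' + g + e1v d = y' + e1v d + g := by abel
      rw [this]; exact h
    refine ⟨y' + e1v d + g, -e1v d, Or.inr ⟨e1v d, g, he1, hg, rfl, hmid, hy⟩, hy, Dir_neg he1,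
      ?_, ?_⟩
    · have : y' + e1v d + g + -e1v d = y' + g := by abel
      rw [this]; exact hw
    · refine ⟨y' + g, Finset.mem_insert_of_mem hw, ?_⟩
      have : y' + g + e1v d = y' + e1v d + g := by abel
      rw [this]; exact Finset.mem_insert_self _ _

lemma geomB {d : ℕ} (hd : 0 < d) (v y' g : Pt d) (hy' : y' ∉ ({v, v + e1v d} : Finset (Pt d)))
    (hg : g ∈ Dir d) (hw : y' + g ∈ ({v, v + e1v d} : Finset (Pt d))) :
    ∃ y e, Reach2 d {v, v + e1v d} y' y ∧ y ∉ ({v, v + e1v d} : Finset (Pt d)) ∧ e ∈ Dir d ∧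
      y + e ∈ ({v, v + e1v d} : Finset (Pt d)) ∧ (y = v + -e1v d ∨ y = v + e1v d + e1v d) := by
  have he1 := e1v_mem hd
  have he0 := e1v_zero hd
  have hgc := Dir_coord hg ⟨0, hd⟩
  rw [abs_le] at hgc
  have hn1 : v + -e1v d ∉ ({v, v + e1v d} : Finset (Pt d)) := by
    simp only [Finset.mem_insert, Finset.mem_singleton, not_or]
    constructor <;> intro h <;> have := congrFun h ⟨0, hd⟩ <;>
      simp only [Pi.add_apply, Pi.neg_apply, he0] at this <;> omega
  have hn2 : v + e1v d + e1v d ∉ ({v, v + e1v d} : Finset (Pt d)) := by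
    simp only [Finset.mem_insert, Finset.mem_singleton, not_or]
    constructor <;> intro h <;> have := congrFun h ⟨0, hd⟩ <;>
      simp only [Pi.add_apply, he0] at this <;> omega
  simp only [Finset.mem_insert, Finset.mem_singleton] at hw
  rcases hw with hw | hw
  · have hyy : y' = v - g := by rw [← hw]; abel
    refine ⟨v + -e1v d, e1v d, ?_, hn1, he1, by simp, Or.inl rfl⟩
    by_cases hg1 : g = e1v d
    · left; rw [hyy, hg1]; abel
    · right
      refine ⟨-e1v d, g, Dir_neg he1, hg, by rw [hyy]; abel, ?_, hn1⟩
      simp only [Finset.mem_insert, Finset.mem_singleton, not_or]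
      constructor
      · intro h
        apply hy'
        have : y' = v + e1v d := by rw [← h]; abel
        rw [this]; simp
      · intro h
        have := congrFun h ⟨0, hd⟩
        rw [hyy] at this
        simp only [Pi.add_apply, Pi.sub_apply, Pi.neg_apply, he0] at this
        omega
  · have hyy : y' = v + e1v d - g := by rw [← hw]; abel
    refine ⟨v + e1v d + e1v d, -e1v d, ?_, hn2, Dir_neg he1, by simp, Or.inr rfl⟩
    by_cases hg1 : g = -e1v d
    · left; rw [hyy, hg1]; abel
    · right
      refine ⟨e1v d, g, he1, hg, by rw [hyy]; abel, ?_, hn2⟩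
      simp only [Finset.mem_insert, Finset.mem_singleton, not_or]
      constructor
      · intro h
        have := congrFun h ⟨0, hd⟩
        rw [hyy] at this
        simp only [Pi.add_apply, Pi.sub_apply, he0] at this
        omega
      · intro h
        apply hy'
        have : y' = v := add_right_cancel h
        rw [this]; simp

lemma stepA {d : ℕ} (hd : 0 < d) (A : Finset (Pt d)) (hA : A.card = 2 ∨ A.card = 3) :
    ∃ x y, x ∈ A ∧ y ∉ A.erase x ∧ Pre d (insert y (A.erase x)) ∧
      mB d ≤ transP d ((A : Set (Pt d)) \ {x}) x y := by
  have hne : A.Nonempty := by rw [← Finset.card_pos]; omega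
  obtain ⟨x, hx⟩ := hne
  have hc := Finset.card_erase_of_mem hx
  obtain ⟨y', g, hg, hw, hy', hh⟩ := exists_move hd (A.erase x)
    (by rw [← Finset.card_pos]; omega) (by omega) x (Finset.notMem_erase x A)
  obtain ⟨y, e, hr, hy, he, hye, hpre⟩ := geomA hd (A.erase x) (by omega) y' g hy' hg hw
  refine ⟨x, y, hx, hy, hpre, ?_⟩
  rw [← Finset.coe_erase]
  exact transP_ge hd _ x y' y e (Finset.notMem_erase x A) hh hr he hye

lemma stepB {d : ℕ} (hd : 0 < d) (A : Finset (Pt d)) (hA : A.card = 2 ∨ A.card = 3)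
    (hpre : Pre d A) :
    ∃ x y, x ∈ A ∧ y ∉ A.erase x ∧ insert y (A.erase x) ∈ Ref d ∧
      mB d ≤ transP d ((A : Set (Pt d)) \ {x}) x y := by
  have he0 := e1v_zero hd
  have hvne : ∀ v : Pt d, v ≠ v + e1v d := by
    intro v h
    have := congrFun h ⟨0, hd⟩
    simp only [Pi.add_apply, he0] at this
    omega
  rcases hA with hA | hA
  · obtain ⟨x, y, hx, hy, ⟨v, hv1, hv2⟩, ht⟩ := stepA hd A (Or.inl hA)
    refine ⟨x, y, hx, hy, ⟨v, Or.inl ?_⟩, ht⟩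
    symm
    apply Finset.eq_of_subset_of_card_le
    · intro a ha
      simp only [Finset.mem_insert, Finset.mem_singleton] at ha
      rcases ha with rfl | rfl <;> assumption
    · rw [Finset.card_insert_of_notMem hy, Finset.card_erase_of_mem hx, Finset.card_pair (hvne v)]
      omega
  · obtain ⟨v, hv1, hv2⟩ := hpre
    have hsub : ({v, v + e1v d} : Finset (Pt d)) ⊆ A := by
      intro a ha
      simp only [Finset.mem_insert, Finset.mem_singleton] at ha
      rcases ha with rfl | rfl <;> assumption
    obtain ⟨z, hzA, hz⟩ : ∃ z ∈ A, z ∉ ({v, v + e1v d} : Finset (Pt d)) := by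
      apply Finset.exists_mem_notMem_of_card_lt_card
      rw [Finset.card_pair (hvne v)]; omega
    have hW : A.erase z = {v, v + e1v d} := by
      symm
      apply Finset.eq_of_subset_of_card_le
      · intro a ha
        exact Finset.mem_erase.mpr ⟨fun h => hz (h ▸ ha), hsub ha⟩
      · rw [Finset.card_erase_of_mem hzA, Finset.card_pair (hvne v)]
        omega
    obtain ⟨y', g, hg, hw, hy', hh⟩ := exists_move hd ({v, v + e1v d} : Finset (Pt d))
      (by simp) (by rw [Finset.card_pair (hvne v)]) z hz
    obtain ⟨y, e, hr, hy, he, hye, hyv⟩ := geomB hd v y' g hy' hg hw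
    refine ⟨z, y, hzA, by rw [hW]; exact hy, ?_, ?_⟩
    · rw [hW]
      rcases hyv with rfl | rfl
      · refine ⟨v + -e1v d, Or.inr ?_⟩
        have h1 : v + -e1v d + e1v d = v := by abel
        rw [h1]
      · refine ⟨v, Or.inr ?_⟩
        ext a
        simp only [Finset.mem_insert, Finset.mem_singleton]
        tauto
    · rw [← Finset.coe_erase, hW]
      exact transP_ge hd _ z y' y e hz hh hr he hye

lemma capS_nonneg {d : ℕ} (D : ClusteringS d) : 0 ≤ capS d D := by
  unfold capS
  apply Finset.sum_nonneg
  intro i _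
  rw [capa_eq]
  exact Finset.sum_nonneg (fun _ _ => esc_nonneg _ _)

lemma transP_nonneg {d : ℕ} (W : Set (Pt d)) (x y : Pt d) : 0 ≤ transP d W x y :=
  div_nonneg (tsum_nonneg (fun _ => prob_nonneg _ _ _)) (tsum_nonneg (fun _ => prob_nonneg _ _ _))

lemma qIHAT_nonneg {d : ℕ} (D : ClusteringS d) (i : Fin D.1) (x y : Pt d) :
    0 ≤ qIHAT d D i x y :=
  mul_nonneg (div_nonneg (esc_nonneg _ _) (capS_nonneg _)) (transP_nonneg _ _ _)

lemma qIHAT_ge {d n : ℕ} (hd : 5 ≤ d) (D : ClusteringS d) (hk : D.1 ≤ n)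
    (hD : ∀ i, (D.2 i).card = 2 ∨ (D.2 i).card = 3) (i : Fin D.1) (x y : Pt d)
    (hx : x ∈ D.2 i) (hm : mB d ≤ transP d ((D.2 i : Set (Pt d)) \ {x}) x y) :
    escLB d / (3 * n) * mB d ≤ qIHAT d D i x y := by
  have hd0 : 0 < d := by omega
  have hpos := escLB_pos hd
  have hi := esc_ge hd (D.2 i) (by have := hD i; omega) x hx
  have hcap_le : capS d D ≤ 3 * n := by
    unfold capS
    calc ∑ i, capa d (D.2 i : Set (Pt d)) ≤ ∑ i : Fin D.1, (3 : ℝ) := by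
          apply Finset.sum_le_sum
          intro l _
          rw [capa_eq]
          refine (Finset.sum_le_card_nsmul _ _ 1 (fun z _ => esc_le_one hd0 _ _)).trans ?_
          have : (D.2 l).card ≤ 3 := by have := hD l; omega
          rw [nsmul_eq_mul, mul_one]
          exact_mod_cast this
      _ = 3 * D.1 := by simp [mul_comm]
      _ ≤ 3 * n := by
          have : (D.1 : ℝ) ≤ n := by exact_mod_cast hk
          linarith
  have hcap_pos : 0 < capS d D := by
    refine lt_of_lt_of_le (lt_of_lt_of_le hpos hi) ?_
    unfold capS
    refine le_trans ?_ (Finset.single_le_sum (f := fun l => capa d (D.2 l : Set (Pt d)))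
      (fun l _ => by rw [capa_eq]; exact Finset.sum_nonneg (fun _ _ => esc_nonneg _ _))
      (Finset.mem_univ i))
    rw [capa_eq]
    exact Finset.single_le_sum (f := fun z => esc d (D.2 i : Set (Pt d)) z)
      (fun _ _ => esc_nonneg _ _) hx
  have hmp := mB_pos hd0
  have hesc := esc_nonneg (D.2 i : Set (Pt d)) x
  unfold qIHAT harmS
  exact mul_le_mul (div_le_div₀ hesc hi hcap_pos hcap_le) hm hmp.le
    (div_nonneg hesc hcap_pos.le)

lemma mem_confOf_updC {d : ℕ} (D : ClusteringS d) (i : Fin D.1) (x y : Pt d) :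
    y ∈ confOf d (updC d D i x y) := by
  unfold confOf updC
  simp only [Finset.mem_biUnion, Finset.mem_univ, true_and]
  exact ⟨i, by simp⟩

lemma ihatProb_ge {d : ℕ} (D : ClusteringS d) (i : Fin D.1) (x y : Pt d)
    (hx : x ∈ D.2 i) : qIHAT d D i x y ≤ ihatProb d D (updC d D i x y) := by
  classical
  set E := updC d D i x y with hE
  let f : Pt d → Pt d → ℝ := fun a b => ∑ l : Fin D.1,
    if a ∈ D.2 l ∧ E = updC d D l a b then qIHAT d D l a b else 0
  have hf0 : ∀ a b, 0 ≤ f a b := fun a b => Finset.sum_nonneg (fun l _ => by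
    split_ifs
    · exact qIHAT_nonneg _ _ _ _
    · exact le_rfl)
  have hex : ∀ a b, f a b ≠ 0 → ∃ l, a ∈ D.2 l ∧ E = updC d D l a b := by
    intro a b h
    obtain ⟨l, _, hl⟩ := Finset.exists_ne_zero_of_sum_ne_zero h
    refine ⟨l, ?_⟩
    by_contra hc
    exact hl (if_neg hc)
  have hs1 : ∀ a, Summable (f a) := by
    intro a
    apply summable_of_hasFiniteSupport
    apply (Finset.finite_toSet (confOf d E)).subset
    intro b hb
    obtain ⟨l, -, hl⟩ := hex a b hb
    rw [hl]
    exact mem_confOf_updC D l a b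
  have hs2 : Summable (fun a => ∑' b, f a b) := by
    apply summable_of_hasFiniteSupport
    apply (Finset.finite_toSet (confOf d D)).subset
    intro a ha
    have : ∃ b, f a b ≠ 0 := by
      by_contra hc
      push Not at hc
      apply ha
      simp [hc]
    obtain ⟨b, hb⟩ := this
    obtain ⟨l, hl, -⟩ := hex a b hb
    simp only [confOf, Finset.coe_biUnion, Set.mem_iUnion]
    exact ⟨l, by simp, by exact_mod_cast hl⟩
  have h1 : qIHAT d D i x y ≤ f x y := by
    have := Finset.single_le_sum (f := fun l : Fin D.1 =>
      if x ∈ D.2 l ∧ E = updC d D l x y then qIHAT d D l x y else 0) (s := Finset.univ)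
      (fun l _ => by
        split_ifs
        · exact qIHAT_nonneg _ _ _ _
        · exact le_rfl) (Finset.mem_univ i)
    rwa [if_pos ⟨hx, hE⟩] at this
  have h2 : f x y ≤ ∑' b, f x b := (hs1 x).le_tsum y (fun b _ => hf0 x b)
  have h3 : ∑' b, f x b ≤ ∑' a, ∑' b, f a b :=
    hs2.le_tsum x (fun a _ => tsum_nonneg (fun b => hf0 a b))
  have h4 : ihatProb d D E = ∑' a, ∑' b, f a b := by
    unfold ihatProb
    simp only [f]
  rw [h4]
  linarith

/-- Invariant set of clusterings. -/
def GoodC (d k : ℕ) (D : ClusteringS d) : Prop :=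
  D.1 = k ∧ ∀ i, (D.2 i).card = 2 ∨ (D.2 i).card = 3

lemma card_updC {d : ℕ} (D : ClusteringS d) (hD : ∀ i, (D.2 i).card = 2 ∨ (D.2 i).card = 3)
    (i : Fin D.1) (x y : Pt d) (hx : x ∈ D.2 i) (hy : y ∉ (D.2 i).erase x) (l : Fin D.1) :
    ((updC d D i x y).2 l).card = 2 ∨ ((updC d D i x y).2 l).card = 3 := by
  unfold updC
  by_cases h : l = i
  · subst h
    simp only [Function.update_self]
    rw [Finset.card_insert_of_notMem hy, Finset.card_erase_of_mem hx]
    have := hD l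
    omega
  · simp only [Function.update_of_ne h]
    exact hD l

lemma good_step {d k : ℕ} (D E : ClusteringS d) (hD : GoodC d k D) (h : ihatProb d D E ≠ 0) :
    GoodC d k E := by
  classical
  obtain ⟨x, hx⟩ : ∃ x, (∑' y : Pt d, ∑ i : Fin D.1,
      if x ∈ D.2 i ∧ E = updC d D i x y then qIHAT d D i x y else 0) ≠ 0 := by
    by_contra hc
    push Not at hc
    apply h
    unfold ihatProb
    simp only [hc, tsum_zero]
  obtain ⟨y, hy⟩ : ∃ y, (∑ i : Fin D.1,
      if x ∈ D.2 i ∧ E = updC d D i x y then qIHAT d D i x y else 0) ≠ 0 := by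
    by_contra hc
    push Not at hc
    apply hx
    simp [hc]
  obtain ⟨i, -, hi⟩ := Finset.exists_ne_zero_of_sum_ne_zero hy
  split_ifs at hi with hcond
  · obtain ⟨hxi, rfl⟩ := hcond
    have hhit : hitFrom d ((D.2 i : Set (Pt d)) \ {x}) x y ≠ 0 := by
      intro h0
      apply hi
      simp [qIHAT, transP, h0]
    have hy' := not_mem_of_hit _ x y (by simp) hhit
    rw [← Finset.coe_erase] at hy'
    exact ⟨hD.1, card_updC D hD.2 i x y hxi (by exact_mod_cast hy')⟩
  · exact absurd rfl hi

lemma two_steps {d n : ℕ} (hd : 5 ≤ d) (D : ClusteringS d) (hk : D.1 ≤ n)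
    (hD : ∀ i, (D.2 i).card = 2 ∨ (D.2 i).card = 3) (i : Fin D.1) :
    ∃ C1 C2 : Fin D.1 → Finset (Pt d),
      escLB d / (3 * n) * mB d ≤ ihatProb d D ⟨D.1, C1⟩ ∧
      escLB d / (3 * n) * mB d ≤ ihatProb d ⟨D.1, C1⟩ ⟨D.1, C2⟩ ∧
      (∀ l, (C2 l).card = 2 ∨ (C2 l).card = 3) ∧ C2 i ∈ Ref d ∧ ∀ l, l ≠ i → C2 l = D.2 l := by
  have hd0 : 0 < d := by omega
  obtain ⟨x, y, hx, hy, hpre, hm⟩ := stepA hd0 (D.2 i) (hD i)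
  obtain ⟨C1, hC1⟩ : ∃ C1, C1 = Function.update D.2 i (insert y ((D.2 i).erase x)) := ⟨_, rfl⟩
  have hU : updC d D i x y = ⟨D.1, C1⟩ := by rw [hC1]; rfl
  have hc1 : ∀ l, (C1 l).card = 2 ∨ (C1 l).card = 3 := by
    rw [hC1]; exact card_updC D hD i x y hx hy
  have hD1i : C1 i = insert y ((D.2 i).erase x) := by
    rw [hC1]; exact Function.update_self _ _ _
  obtain ⟨x', y', hx', hy', href, hm'⟩ := stepB hd0 (C1 i) (hc1 i) (by rw [hD1i]; exact hpre)
  have hc2 := card_updC ⟨D.1, C1⟩ hc1 i x' y' hx' hy'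
  refine ⟨C1, Function.update C1 i (insert y' ((C1 i).erase x')), ?_, ?_, hc2, ?_, ?_⟩
  · rw [← hU]
    exact (qIHAT_ge hd D hk hD i x y hx hm).trans (ihatProb_ge D i x y hx)
  · exact (qIHAT_ge hd ⟨D.1, C1⟩ hk hc1 i x' y' hx' hm').trans
      (ihatProb_ge ⟨D.1, C1⟩ i x' y' hx')
  · rw [Function.update_self]
    exact href
  · intro l hl
    rw [Function.update_of_ne hl, hC1, Function.update_of_ne hl]

lemma four_steps {d n k : ℕ} (hd : 5 ≤ d) (hk : k ≤ n) (i j : Fin k) (hij : i ≠ j)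
    (D : ClusteringS d) (hD : GoodC d k D) :
    ∃ D1 D2 D3 D4 : ClusteringS d,
      escLB d / (3 * n) * mB d ≤ ihatProb d D D1 ∧
      escLB d / (3 * n) * mB d ≤ ihatProb d D1 D2 ∧
      escLB d / (3 * n) * mB d ≤ ihatProb d D2 D3 ∧
      escLB d / (3 * n) * mB d ≤ ihatProb d D3 D4 ∧
      ∃ h : D4.1 = k, D4.2 (Fin.cast h.symm i) ∈ Ref d ∧ D4.2 (Fin.cast h.symm j) ∈ Ref d := by
  obtain ⟨hDk, hDc⟩ := hD
  subst hDk
  obtain ⟨C1, C2, h1, h2, h3, h4, h5⟩ := two_steps hd D hk hDc i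
  obtain ⟨C3, C4, g1, g2, g3, g4, g5⟩ := two_steps (n := n) hd ⟨D.1, C2⟩ hk h3 j
  refine ⟨⟨D.1, C1⟩, ⟨D.1, C2⟩, ⟨D.1, C3⟩, ⟨D.1, C4⟩, h1, h2, g1, g2, rfl, ?_, ?_⟩
  · change C4 i ∈ Ref d
    rw [g5 i hij]; exact h4
  · exact g4

end Moves
section Chain

lemma chain_contract {X : Type*} [Countable X] [MeasurableSpace X] [MeasurableSingletonClass X]
    (q : X → X → ℝ) (D0 : X) (μ : Measure (ℕ → X)) [IsProbabilityMeasure μ]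
    (hμ : ∀ (t : ℕ) (u : ℕ → X), u 0 ≠ D0 → μ {ω | ∀ s ≤ t, ω s = u s} = 0)
    (hμ' : ∀ (t : ℕ) (u : ℕ → X), u 0 = D0 → μ {ω | ∀ s ≤ t, ω s = u s} =
      ∏ s ∈ Finset.range t, ENNReal.ofReal (q (u s) (u (s + 1))))
    (G R : X → Prop) (hG0 : G D0) (hG : ∀ a b, G a → q a b ≠ 0 → G b) (p : ℝ) (hp : 0 ≤ p)
    (h4 : ∀ a, G a → ∃ b1 b2 b3 b4, p ≤ q a b1 ∧ p ≤ q b1 b2 ∧ p ≤ q b2 b3 ∧ p ≤ q b3 b4 ∧ R b4)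
    (t : ℕ) :
    μ {ω | ∀ s, 1 ≤ s → s ≤ t + 4 → ¬ R (ω s)} ≤
      (1 - ENNReal.ofReal (p ^ 4)) * μ {ω | ∀ s, 1 ≤ s → s ≤ t → ¬ R (ω s)} := by
  classical
  let cyl : ℕ → (ℕ → X) → Set (ℕ → X) := fun t u => {ω | ∀ s ≤ t, ω s = u s}
  let B : ℕ → Set (ℕ → X) := fun t => {ω | ∀ s, 1 ≤ s → s ≤ t → ¬ R (ω s)}
  have hcm : ∀ t u, MeasurableSet (cyl t u) := by
    intro t u
    have : cyl t u = ⋂ s, ⋂ (_ : s ≤ t), (fun ω : ℕ → X => ω s) ⁻¹' {u s} := by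
      ext ω; simp [cyl]
    rw [this]
    exact MeasurableSet.iInter (fun s => MeasurableSet.iInter (fun _ =>
      measurable_pi_apply s (measurableSet_singleton _)))
  let ext : (Fin (t + 1) → X) → ℕ → X := fun w s => w ⟨min s t, by omega⟩
  let I := {w : Fin (t + 1) → X // ext w ∈ B t}
  have hrep : ∀ ω : ℕ → X, ω ∈ cyl t (ext (fun s => ω s)) := by
    intro ω s hs
    simp [ext, min_eq_left hs]
  have hBmem : ∀ ω ω' : ℕ → X, ω ∈ cyl t ω' → ω ∈ B t → ω' ∈ B t := by
    intro ω ω' h hB s h1 h2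
    rw [← h s h2]; exact hB s h1 h2
  have hBeq : B t = ⋃ w : I, cyl t (ext w.1) := by
    ext ω
    simp only [Set.mem_iUnion]
    constructor
    · intro h
      exact ⟨⟨fun s => ω s, hBmem _ _ (hrep ω) h⟩, hrep ω⟩
    · rintro ⟨w, hw⟩ s h1 h2
      rw [hw s h2]; exact w.2 s h1 h2
  have hdisj : Pairwise (Function.onFun Disjoint (fun w : I => cyl t (ext w.1))) := by
    intro w w' hne
    rw [Function.onFun, Set.disjoint_left]
    intro ω h h'
    apply hne
    apply Subtype.ext
    funext s
    have h1 := h s (by omega)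
    have h2 := h' s (by omega)
    have hs : min (s : ℕ) t = s := by omega
    simp only [ext, hs] at h1 h2
    rw [← h1, ← h2]
  have hBmeas : μ (B t) = ∑' w : I, μ (cyl t (ext w.1)) := by
    exact (congrArg μ hBeq).trans (measure_iUnion hdisj (fun w => hcm _ _))
  have hsub : B (t + 4) ⊆ ⋃ w : I, (B (t + 4) ∩ cyl t (ext w.1)) := by
    rw [← Set.inter_iUnion, ← hBeq]
    exact fun ω h => ⟨h, fun s h1 h2 => h s h1 (by omega)⟩
  have key : ∀ u : ℕ → X, μ (B (t + 4) ∩ cyl t u) ≤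
      (1 - ENNReal.ofReal (p ^ 4)) * μ (cyl t u) := by
    intro u
    by_cases hz : μ (cyl t u) = 0
    · exact (measure_mono Set.inter_subset_right).trans (by rw [hz]; simp)
    have hu0 : u 0 = D0 := by
      by_contra h
      exact hz (hμ t u h)
    have hprod := hμ' t u hu0
    have hG' : ∀ s, s ≤ t → G (u s) := by
      intro s
      induction s with
      | zero => intro _; rw [hu0]; exact hG0
      | succ s ih =>
        intro hs
        refine hG _ _ (ih (by omega)) (fun h => hz ?_)
        refine hprod.trans (Finset.prod_eq_zero (Finset.mem_range.mpr (show s < t by omega)) ?_)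
        rw [h]; simp
    obtain ⟨b1, b2, b3, b4, q1, q2, q3, q4, hR⟩ := h4 (u t) (hG' t le_rfl)
    let u' : ℕ → X := fun s => if s ≤ t then u s else if s = t + 1 then b1 else
      if s = t + 2 then b2 else if s = t + 3 then b3 else b4
    have hle : ∀ s, s ≤ t → u' s = u s := fun s hs => if_pos hs
    have e1 : u' (t + 1) = b1 := by simp [u']
    have e2 : u' (t + 2) = b2 := by simp [u']
    have e3 : u' (t + 3) = b3 := by simp [u']
    have e4 : u' (t + 4) = b4 := by simp [u']
    have hcyl' : μ (cyl (t + 4) u') = μ (cyl t u) * ENNReal.ofReal (q (u t) b1) *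
        ENNReal.ofReal (q b1 b2) * ENNReal.ofReal (q b2 b3) * ENNReal.ofReal (q b3 b4) := by
      refine (hμ' (t + 4) u' (by rw [hle 0 (by omega), hu0])).trans ?_
      rw [Finset.prod_range_succ, Finset.prod_range_succ, Finset.prod_range_succ,
        Finset.prod_range_succ]
      simp only [add_assoc, Nat.reduceAdd]
      rw [e1, e2, e3, e4, hle t le_rfl]
      congr 4
      refine Eq.trans ?_ hprod.symm
      apply Finset.prod_congr rfl
      intro s hs
      rw [Finset.mem_range] at hs
      rw [hle s (by omega), hle (s + 1) (by omega)]
    have hge : μ (cyl t u) * ENNReal.ofReal (p ^ 4) ≤ μ (cyl (t + 4) u') := by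
      rw [hcyl', ENNReal.ofReal_pow hp]
      have : μ (cyl t u) * ENNReal.ofReal p ^ 4 = μ (cyl t u) * ENNReal.ofReal p *
        ENNReal.ofReal p * ENNReal.ofReal p * ENNReal.ofReal p := by ring
      rw [this]
      gcongr
    have hs' : cyl (t + 4) u' ⊆ cyl t u := by
      intro ω h s hs
      rw [h s (by omega), hle s hs]
    have hsub' : B (t + 4) ∩ cyl t u ⊆ cyl t u \ cyl (t + 4) u' := by
      rintro ω ⟨hB, hc⟩
      refine ⟨hc, fun h => ?_⟩
      have := hB (t + 4) (by omega) le_rfl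
      rw [h (t + 4) le_rfl, e4] at this
      exact this hR
    calc μ (B (t + 4) ∩ cyl t u) ≤ μ (cyl t u \ cyl (t + 4) u') := measure_mono hsub'
      _ = μ (cyl t u) - μ (cyl (t + 4) u') :=
          measure_sdiff hs' (hcm _ _).nullMeasurableSet (measure_ne_top _ _)
      _ ≤ μ (cyl t u) - μ (cyl t u) * ENNReal.ofReal (p ^ 4) := tsub_le_tsub_left hge _
      _ = (1 - ENNReal.ofReal (p ^ 4)) * μ (cyl t u) := by
          rw [ENNReal.sub_mul (fun _ _ => measure_ne_top _ _), one_mul, mul_comm]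
  calc μ (B (t + 4)) ≤ μ (⋃ w : I, (B (t + 4) ∩ cyl t (ext w.1))) := measure_mono hsub
    _ ≤ ∑' w : I, μ (B (t + 4) ∩ cyl t (ext w.1)) := measure_iUnion_le _
    _ ≤ ∑' w : I, (1 - ENNReal.ofReal (p ^ 4)) * μ (cyl t (ext w.1)) :=
        ENNReal.tsum_le_tsum (fun w => key _)
    _ = (1 - ENNReal.ofReal (p ^ 4)) * μ (B t) := by rw [ENNReal.tsum_mul_left, hBmeas]

lemma iterate_bound (f : ℕ → ENNReal) (r : ENNReal) (h0 : ∀ t, f t ≤ 1)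
    (h : ∀ t, f (t + 4) ≤ r * f t) (hanti : Antitone f) (t : ℕ) : f t ≤ r ^ (t / 4) := by
  have h1 : ∀ m, f (4 * m) ≤ r ^ m := by
    intro m
    induction m with
    | zero => simpa using h0 0
    | succ m ih =>
      rw [pow_succ, mul_comm (r ^ m)]
      exact (h (4 * m)).trans (by gcongr)
  exact (hanti (Nat.mul_div_le t 4)).trans (h1 _)

lemma exp_bound (p : ℝ) (hp : 0 < p) (hp2 : p ≤ 1 / 2) :
    ∃ c : ℝ, 0 < c ∧ ∀ t : ℕ, (1 - p ^ 4) ^ (t / 4) ≤ 2 * Real.exp (-c * t) := by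
  have h4 : p ^ 4 ≤ (1 / 2) ^ 4 := by gcongr
  have h5 : 0 < p ^ 4 := by positivity
  norm_num at h4
  set r := 1 - p ^ 4 with hr
  have hr0 : 0 < r := by linarith
  have hr1 : r < 1 := by linarith
  have hl : Real.log r < 0 := Real.log_neg hr0 hr1
  refine ⟨-Real.log r / 4, by linarith, fun t => ?_⟩
  have hlow : -Real.log 2 ≤ Real.log r := by
    rw [← Real.log_inv]
    apply Real.log_le_log (by norm_num)
    norm_num; linarith
  have e : r ^ (t / 4) = Real.exp (Real.log r * ((t / 4 : ℕ) : ℝ)) := by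
    rw [mul_comm, Real.exp_nat_mul, Real.exp_log hr0]
  have e2 : (2 : ℝ) = Real.exp (Real.log 2) := (Real.exp_log (by norm_num)).symm
  have e3 : 2 * Real.exp (-(-Real.log r / 4) * t) =
      Real.exp (Real.log 2 + -(-Real.log r / 4) * t) := by
    rw [Real.exp_add, ← e2]
  rw [e, e3]
  apply Real.exp_le_exp.mpr
  have hm : (t : ℝ) ≤ 4 * ((t / 4 : ℕ) : ℝ) + 3 := by
    have : t ≤ 4 * (t / 4) + 3 := by omega
    exact_mod_cast this
  nlinarith

end Chain
/-- **Reference times have exponential tails.** For `d ≥ 5`, `n ≥ 4` there is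
`c = c(d,n) > 0` such that, for any dimer-or-trimer clustering `D0` of an `n`-element
configuration in `ℤ^d` with distinct clusters `i ≠ j`, under IHAT, the first time `≥ 1`
at which clusters `i` and `j` both belong to `Ref` exceeds `t` with probability at most
`2 e^{−ct}`. -/
theorem xi_tail (d n : ℕ) (hd : 5 ≤ d) (hn : 4 ≤ n) :
    ∃ c : ℝ, 0 < c ∧
      ∀ D0 : ClusteringS d, IsClusteringConf d n D0 →
        (∀ i, (D0.2 i).card = 2 ∨ (D0.2 i).card = 3) →
        ∀ i j : Fin D0.1, i ≠ j →
          ∀ μ : Measure (ℕ → ClusteringS d), IsIHATLaw d D0 μ →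
            ∀ t : ℕ,
              μ {ω | ∀ s, 1 ≤ s → s ≤ t →
                  ¬ ∃ h : (ω s).1 = D0.1,
                    (ω s).2 (Fin.cast h.symm i) ∈ Ref d ∧
                    (ω s).2 (Fin.cast h.symm j) ∈ Ref d} ≤
                ENNReal.ofReal (2 * Real.exp (-c * t)) := by
  have hp0 : 0 < escLB d / (3 * n) * mB d := by
    have h1 := escLB_pos hd
    have h2 := mB_pos (d := d) (by omega)
    have h3 : (0 : ℝ) < n := by exact_mod_cast (by omega : 0 < n)
    positivity
  obtain ⟨p, hp, hpl, hp2⟩ : ∃ p : ℝ, 0 < p ∧ p ≤ escLB d / (3 * n) * mB d ∧ p ≤ 1 / 2 :=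
    ⟨min (escLB d / (3 * n) * mB d) (1 / 2), lt_min hp0 (by norm_num), min_le_left _ _,
      min_le_right _ _⟩
  obtain ⟨c, hc, hexp⟩ := exp_bound p hp hp2
  refine ⟨c, hc, ?_⟩
  intro D0 hconf hcard i j hij μ hlaw t
  obtain ⟨hprob, hcyl⟩ := hlaw
  obtain ⟨hne, hdisj, hsz⟩ := hconf
  have hk : D0.1 ≤ n := by
    rw [← hsz]
    unfold confOf
    rw [Finset.card_biUnion (fun a _ b _ hab => hdisj a b hab)]
    calc D0.1 = ∑ _l : Fin D0.1, 1 := by simp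
      _ ≤ ∑ l, (D0.2 l).card := Finset.sum_le_sum (fun l _ => (hne l).card_pos)
  haveI : MeasurableSingletonClass (ClusteringS d) := ⟨fun _ => trivial⟩
  haveI : Countable (Pt d) := by unfold Pt; infer_instance
  let R : ClusteringS d → Prop := fun ω => ∃ h : ω.1 = D0.1,
    ω.2 (Fin.cast h.symm i) ∈ Ref d ∧ ω.2 (Fin.cast h.symm j) ∈ Ref d
  have hstep := chain_contract (ihatProb d) D0 μ
    (fun t u hu => by rw [hcyl t u, if_neg hu, zero_mul])
    (fun t u hu => by rw [hcyl t u, if_pos hu, one_mul])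
    (GoodC d D0.1) R ⟨rfl, hcard⟩ (fun a b ha hb => good_step a b ha hb) p hp.le
    (fun a ha => by
      obtain ⟨b1, b2, b3, b4, h1, h2, h3, h4, hR⟩ := four_steps hd hk i j hij a ha
      exact ⟨b1, b2, b3, b4, hpl.trans h1, hpl.trans h2, hpl.trans h3, hpl.trans h4, hR⟩)
  have hb := iterate_bound (fun t => μ {ω | ∀ s, 1 ≤ s → s ≤ t → ¬ R (ω s)})
    (1 - ENNReal.ofReal (p ^ 4)) (fun t => MeasureTheory.prob_le_one) hstep
    (fun a b hab => measure_mono (fun ω h s h1 h2 => h s h1 (h2.trans hab))) t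
  refine hb.trans ?_
  have hp4 : p ^ 4 ≤ 1 := pow_le_one₀ hp.le (by linarith)
  have e : (1 - ENNReal.ofReal (p ^ 4)) ^ (t / 4) = ENNReal.ofReal ((1 - p ^ 4) ^ (t / 4)) := by
    rw [ENNReal.ofReal_pow (p := 1 - p ^ 4) (by linarith), ENNReal.ofReal_sub _ (by positivity),
      ENNReal.ofReal_one]
  rw [e]
  exact ENNReal.ofReal_le_ofReal (hexp t)

end HATFormal
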